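/- For all n ≥ 5, the number of idempotents of the Jones monoid J_n of rank n − 4 is e_{n;·,n−4} = (n/2)(9n − 35). -/

import Mathlib

open Relation

/-! ### The partition monoid and its planar submonoids -/

/-- Vertices of a partition diagram: `Sum.inl i` is the upper vertex `i`,
`Sum.inr i` is the lower vertex `i′`. -/
abbrev PV (n : ℕ) := Fin n ⊕ Fin n

/-- An element of the partition monoid `P_n`: a set partition of the `2n` vertices,
encoded as an equivalence relation (setoid). -/
abbrev PElt (n : ℕ) := Setoid (PV n)

/-- Three layers of vertices, used to form products. -/
abbrev TV (n : ℕ) := Fin n ⊕ (Fin n ⊕ Fin n)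

/-- Embedding of the vertices of the upper factor into the three layers. -/
def upEmb {n : ℕ} : PV n → TV n
  | .inl i => .inl i
  | .inr i => .inr (.inl i)

/-- Embedding of the vertices of the lower factor into the three layers. -/
def downEmb {n : ℕ} : PV n → TV n
  | .inl i => .inr (.inl i)
  | .inr i => .inr (.inr i)

/-- Embedding of the vertices of the product into the three layers. -/
def outEmb {n : ℕ} : PV n → TV n
  | .inl i => .inl i
  | .inr i => .inr (.inr i)

/-- The stacked graph of `a` on `b`: relations of `a` on layers 1–2 together with
relations of `b` on layers 2–3. -/
def stackRel {n : ℕ} (a b : PElt n) : TV n → TV n → Prop := fun x y =>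
  (∃ p q : PV n, a.r p q ∧ x = upEmb p ∧ y = upEmb q) ∨
  (∃ p q : PV n, b.r p q ∧ x = downEmb p ∧ y = downEmb q)

/-- The finest common coarsening (transitive closure) of the stacked graph. -/
def stackSetoid {n : ℕ} (a b : PElt n) : Setoid (TV n) :=
  EqvGen.setoid (stackRel a b)

/-- The product in the partition monoid: restrict the coarsening of the stacked graph
to the outer two layers. -/
def pmul {n : ℕ} (a b : PElt n) : PElt n :=
  Setoid.comap outEmb (stackSetoid a b)

/-- The identity of the partition monoid: blocks `{i, i′}`. -/
def pid (n : ℕ) : PElt n :=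
  ⟨fun x y => Sum.elim id id x = Sum.elim id id y,
    ⟨fun _ => rfl, fun h => h.symm, fun h₁ h₂ => h₁.trans h₂⟩⟩

/-- A vertex of the triple-layer graph lies in the identified middle row. -/
def isMiddle {n : ℕ} : TV n → Prop
  | .inr (.inl _) => True
  | _ => False

/-- `m(a,b)`: the number of floating components (components of the stacked graph of `a` on `b`
contained entirely in the identified middle row). -/
noncomputable def floatCount {n : ℕ} (a b : PElt n) : ℕ :=
  Nat.card {c : Quotient (stackSetoid a b) //
    ∀ x : TV n, Quotient.mk (stackSetoid a b) x = c → isMiddle x}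

/-- A block (equivalence class) is a transversal if it contains both an upper
and a lower vertex. -/
def IsTransClass {n : ℕ} (a : PElt n) (c : Quotient a) : Prop :=
  (∃ i : Fin n, Quotient.mk a (.inl i) = c) ∧ (∃ j : Fin n, Quotient.mk a (.inr j) = c)

/-- The rank of a partition: the number of transversal blocks. -/
noncomputable def prank {n : ℕ} (a : PElt n) : ℕ :=
  Nat.card {c : Quotient a // IsTransClass a c}

/-- Position of a vertex in the boundary order `1, …, n, n′, …, 1′` of the rectangle. -/
def ordIdx (n : ℕ) : PV n → ℕ
  | .inl i => i.val
  | .inr i => 2 * n - 1 - i.val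

/-- Planarity: the partition is non-crossing with respect to the boundary order
`1 < ⋯ < n < n′ < ⋯ < 1′`. -/
def IsPlanar {n : ℕ} (a : PElt n) : Prop :=
  ¬ ∃ w x y z : PV n, ordIdx n w < ordIdx n x ∧ ordIdx n x < ordIdx n y ∧
      ordIdx n y < ordIdx n z ∧ a.r w y ∧ a.r x z ∧ ¬ a.r w x

/-- The size of the block containing a given vertex. -/
noncomputable def blockCard {n : ℕ} (a : PElt n) (x : PV n) : ℕ :=
  Nat.card {y : PV n // a.r x y}

/-- The Motzkin monoid: planar partitions with all blocks of size at most 2. -/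
def Motzkin (n : ℕ) : Set (PElt n) :=
  {a | IsPlanar a ∧ ∀ x : PV n, blockCard a x ≤ 2}

/-- The Jones (Temperley–Lieb) monoid: planar partitions with all blocks of size
exactly 2. -/
def Jones (n : ℕ) : Set (PElt n) :=
  {a | IsPlanar a ∧ ∀ x : PV n, blockCard a x = 2}

/-! ### The interface graph -/

/-- Lower edge of the interface graph `Γ(a)`: a block `{i,j}` of `a` on upper vertices. -/
def LowEdge {n : ℕ} (a : PElt n) (i j : Fin n) : Prop :=
  i ≠ j ∧ a.r (.inl i) (.inl j)

/-- Upper edge of the interface graph `Γ(a)`: a block `{i′,j′}` of `a` on lower vertices. -/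
def UpEdge {n : ℕ} (a : PElt n) (i j : Fin n) : Prop :=
  i ≠ j ∧ a.r (.inr i) (.inr j)

/-- Vertex `i` of `Γ(a)` carries a lower edge. -/
def hasLow {n : ℕ} (a : PElt n) (i : Fin n) : Prop := ∃ j, LowEdge a i j

/-- Vertex `i` of `Γ(a)` carries an upper edge. -/
def hasUp {n : ℕ} (a : PElt n) (i : Fin n) : Prop := ∃ j, UpEdge a i j

/-- Vertex `i` is active downwards: the upper vertex `i` lies in a transversal of `a`. -/
def activeDown {n : ℕ} (a : PElt n) (i : Fin n) : Prop := ∃ j : Fin n, a.r (.inl i) (.inr j)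

/-- Vertex `i` is active upwards: the lower vertex `i′` lies in a transversal of `a`. -/
def activeUp {n : ℕ} (a : PElt n) (i : Fin n) : Prop := ∃ j : Fin n, a.r (.inr i) (.inl j)

/-- Vertex `i` is inert downwards: the upper vertex `i` is a singleton block of `a`. -/
def inertDown {n : ℕ} (a : PElt n) (i : Fin n) : Prop := ∀ y, a.r (.inl i) y → y = .inl i

/-- Vertex `i` is inert upwards: the lower vertex `i′` is a singleton block of `a`. -/
def inertUp {n : ℕ} (a : PElt n) (i : Fin n) : Prop := ∀ y, a.r (.inr i) y → y = .inr i

/-- Adjacency in the interface graph `Γ(a)`. -/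
def gedge {n : ℕ} (a : PElt n) (i j : Fin n) : Prop := LowEdge a i j ∨ UpEdge a i j

/-- Connectivity in the interface graph `Γ(a)`. -/
def gconn {n : ℕ} (a : PElt n) : Fin n → Fin n → Prop := EqvGen (gedge a)

/-- `θ` is (the vertex set of) a connected component of `Γ(a)`. -/
def IsComp {n : ℕ} (a : PElt n) (θ : Set (Fin n)) : Prop :=
  θ.Nonempty ∧ ∀ i ∈ θ, ∀ j : Fin n, (gconn a i j ↔ j ∈ θ)

/-- `θ` is a cycle component of `Γ(a)`: every vertex carries both a lower and an upper edge. -/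
def IsCycleComp {n : ℕ} (a : PElt n) (θ : Set (Fin n)) : Prop :=
  IsComp a θ ∧ ∀ i ∈ θ, hasLow a i ∧ hasUp a i

/-- `θ` is a path component of `Γ(a)`: some vertex misses an edge on some side. -/
def IsPathComp {n : ℕ} (a : PElt n) (θ : Set (Fin n)) : Prop :=
  IsComp a θ ∧ ∃ i ∈ θ, ¬ hasLow a i ∨ ¬ hasUp a i

/-- An inert path: every terminus is inert on its free side. -/
def IsInertPathComp {n : ℕ} (a : PElt n) (θ : Set (Fin n)) : Prop :=
  IsPathComp a θ ∧ ∀ i ∈ θ,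
    (¬ hasLow a i → inertDown a i) ∧ (¬ hasUp a i → inertUp a i)

/-- A trans-active path: even length (its two free ends lie on opposite sides) with
both termini active on their free sides. -/
def IsTransActivePathComp {n : ℕ} (a : PElt n) (θ : Set (Fin n)) : Prop :=
  IsPathComp a θ ∧
  (∃! i : Fin n, i ∈ θ ∧ ¬ hasLow a i) ∧ (∃! i : Fin n, i ∈ θ ∧ ¬ hasUp a i) ∧
  ∀ i ∈ θ, (¬ hasLow a i → activeDown a i) ∧ (¬ hasUp a i → activeUp a i)

/-- The number of edges of `Γ(a)` contained in `θ` (its length, for a component `θ`). -/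
noncomputable def compEdgeCount {n : ℕ} (a : PElt n) (θ : Set (Fin n)) : ℕ :=
  Nat.card {p : Fin n × Fin n // p.1 < p.2 ∧ p.1 ∈ θ ∧ p.2 ∈ θ ∧ LowEdge a p.1 p.2} +
  Nat.card {p : Fin n × Fin n // p.1 < p.2 ∧ p.1 ∈ θ ∧ p.2 ∈ θ ∧ UpEdge a p.1 p.2}

/-! ### The map `α ↦ α̂` and the sets `D`, `Θ(δ)` -/

/-- The 0-based position of `i` among the upward-active vertices. -/
noncomputable def posUp {n : ℕ} (a : PElt n) (i : Fin n) : ℕ :=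
  Nat.card {j : Fin n // j < i ∧ activeUp a j}

/-- The 0-based position of `i` among the downward-active vertices. -/
noncomputable def posDown {n : ℕ} (a : PElt n) (i : Fin n) : ℕ :=
  Nat.card {j : Fin n // j < i ∧ activeDown a j}

/-- `i` and `j` are consecutive upward-active vertices paired in forming `α̂`
(`i` in an even position `2t`, `j` in position `2t+1 < 2⌊r/2⌋`). -/
noncomputable def pairedUp {n : ℕ} (a : PElt n) (i j : Fin n) : Prop :=
  activeUp a i ∧ activeUp a j ∧ Even (posUp a i) ∧ posUp a j = posUp a i + 1 ∧
    posUp a j < 2 * (prank a / 2)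

/-- `i` and `j` are consecutive downward-active vertices paired in forming `α̂`. -/
noncomputable def pairedDown {n : ℕ} (a : PElt n) (i j : Fin n) : Prop :=
  activeDown a i ∧ activeDown a j ∧ Even (posDown a i) ∧ posDown a j = posDown a i + 1 ∧
    posDown a j < 2 * (prank a / 2)

/-- The transversal relations removed in forming `α̂` (those of the first `2⌊r/2⌋`
transversals). -/
noncomputable def removedTrans {n : ℕ} (a : PElt n) (x y : PV n) : Prop :=
  ∃ i j : Fin n, a.r (.inl i) (.inr j) ∧ posDown a i < 2 * (prank a / 2) ∧
    ((x = .inl i ∧ y = .inr j) ∨ (x = .inr j ∧ y = .inl i))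

/-- The generating relation of `α̂`: the relations of `α` minus the removed transversals,
plus the new blocks pairing consecutive active vertices. -/
noncomputable def hatRel {n : ℕ} (a : PElt n) (x y : PV n) : Prop :=
  (a.r x y ∧ ¬ removedTrans a x y) ∨
  (∃ i j : Fin n, pairedUp a i j ∧
      ((x = .inr i ∧ y = .inr j) ∨ (x = .inr j ∧ y = .inr i))) ∨
  (∃ i j : Fin n, pairedDown a i j ∧
      ((x = .inl i ∧ y = .inl j) ∨ (x = .inl j ∧ y = .inl i)))

/-- The element `α̂` obtained from `α` by pairing off consecutive active vertices. -/
noncomputable def hat {n : ℕ} (a : PElt n) : PElt n := EqvGen.setoid (hatRel a)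

/-- The idempotents of a subset `S` (with respect to the partition product). -/
def Eset {n : ℕ} (S : Set (PElt n)) : Set (PElt n) := {a ∈ S | pmul a a = a}

/-- `D(S) = D₀ ∪ E(D₁)`: the idempotents of `S` of rank at most 1. -/
def Dset {n : ℕ} (S : Set (PElt n)) : Set (PElt n) :=
  {d ∈ S | pmul d d = d ∧ prank d ≤ 1}

/-- `θ` lies (entirely) to the left of the leftmost transversal of `a`. -/
def LeftOfTrans {n : ℕ} (a : PElt n) (θ : Set (Fin n)) : Prop :=
  ∀ i ∈ θ, ∀ j : Fin n, activeDown a j ∨ activeUp a j → i < j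

/-- `Θ(a)`: the cycle components of `Γ(a)` lying entirely to the left of the leftmost
transversal. -/
def ThetaSet {n : ℕ} (a : PElt n) : Set (Set (Fin n)) :=
  {θ | IsCycleComp a θ ∧ LeftOfTrans a θ}

/-! ### Returns, special pairs and `θ`-covers -/

/-- The block `{i,j}` of `a` on upper vertices is an upper return: no upper block
`{k,l}` has `k<i<j<l`, and no transversal contains an upper vertex smaller than `i`. -/
def UpperReturn {n : ℕ} (a : PElt n) (i j : Fin n) : Prop :=
  i < j ∧ a.r (.inl i) (.inl j) ∧
  (¬ ∃ k l : Fin n, k < i ∧ j < l ∧ a.r (.inl k) (.inl l)) ∧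
  (¬ ∃ k : Fin n, k < i ∧ activeDown a k)

/-- The block `{i′,j′}` of `a` on lower vertices is a lower return. -/
def LowerReturn {n : ℕ} (a : PElt n) (i j : Fin n) : Prop :=
  i < j ∧ a.r (.inr i) (.inr j) ∧
  (¬ ∃ k l : Fin n, k < i ∧ j < l ∧ a.r (.inr k) (.inr l)) ∧
  (¬ ∃ k : Fin n, k < i ∧ activeUp a k)

/-- The interface-graph adjacency of `a` after deleting the lower-vertex block `{i′,j′}`
and the upper-vertex block `{k,l}`. -/
def redEdge {n : ℕ} (a : PElt n) (i j k l : Fin n) (u v : Fin n) : Prop :=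
  (LowEdge a u v ∧ ({u, v} : Set (Fin n)) ≠ {k, l}) ∨
  (UpEdge a u v ∧ ({u, v} : Set (Fin n)) ≠ {i, j})

/-- The relation generating the `θ`-cover `a − (e′,f)`, for `e′ = {i′,j′}` and
`f = {k,l}`: delete the two blocks, and join each freed upper vertex to the freed lower
vertex reached along its path. -/
def coverRel {n : ℕ} (a : PElt n) (i j k l : Fin n) (x y : PV n) : Prop :=
  (a.r x y ∧ ({x, y} : Set (PV n)) ≠ {.inl k, .inl l} ∧
    ({x, y} : Set (PV n)) ≠ {.inr i, .inr j}) ∨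
  (∃ u v : Fin n, u ∈ ({k, l} : Set (Fin n)) ∧ v ∈ ({i, j} : Set (Fin n)) ∧
    EqvGen (redEdge a i j k l) u v ∧
    ((x = .inl u ∧ y = .inr v) ∨ (x = .inr v ∧ y = .inl u)))

/-- The `θ`-cover `a − (e′,f)` as a partition. -/
def coverElt {n : ℕ} (a : PElt n) (i j k l : Fin n) : PElt n :=
  EqvGen.setoid (coverRel a i j k l)

/-- `b` is a `θ`-cover of `a`: `θ ∈ Θ(a)` and `b = a − (e′,f)` for some special pair
`(e′,f)` over `θ` (one lower-return and one upper-return edge of `θ`). -/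
def IsThetaCover {n : ℕ} (a : PElt n) (θ : Set (Fin n)) (b : PElt n) : Prop :=
  θ ∈ ThetaSet a ∧
  ∃ i j k l : Fin n, i ∈ θ ∧ j ∈ θ ∧ k ∈ θ ∧ l ∈ θ ∧
    LowerReturn a i j ∧ UpperReturn a k l ∧ b = coverElt a i j k l

/-- `a ≪_d b`: `a = b` or there is a chain of `θ`-covers from `a` to `b` along pairwise
distinct cycles `θ ∈ Θ(d)`. -/
def llRel {n : ℕ} (d : PElt n) (a b : PElt n) : Prop :=
  a = b ∨ ∃ (h : ℕ) (θs : Fin h → Set (Fin n)) (as : Fin (h + 1) → PElt n),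
    Function.Injective θs ∧ (∀ ι, θs ι ∈ ThetaSet d) ∧
    as 0 = a ∧ as (Fin.last h) = b ∧
    ∀ ι : Fin h, IsThetaCover (as ι.castSucc) (θs ι) (as ι.succ)

/-- The fibre `F_d = {α ∈ E(S) : α̂ = d}`. -/
def Fib {n : ℕ} (S : Set (PElt n)) (d : PElt n) : Set (PElt n) :=
  {a ∈ Eset S | hat a = d}

/-- `C_d(θ) = C*_d(θ) ∪ {d}`, where `C*_d(θ)` is the set of `θ`-covers of `d`. -/
def CoverSet {n : ℕ} (d : PElt n) (θ : Set (Fin n)) : Set (PElt n) :=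
  insert d {b | IsThetaCover d θ b}

/-- `u_θ`: the number of upper-return blocks among the edges of `θ`. -/
noncomputable def uRet {n : ℕ} (a : PElt n) (θ : Set (Fin n)) : ℕ :=
  Nat.card {p : Fin n × Fin n // p.1 ∈ θ ∧ p.2 ∈ θ ∧ UpperReturn a p.1 p.2}

/-- `l_θ`: the number of lower-return blocks among the edges of `θ`. -/
noncomputable def lRet {n : ℕ} (a : PElt n) (θ : Set (Fin n)) : ℕ :=
  Nat.card {p : Fin n × Fin n // p.1 ∈ θ ∧ p.2 ∈ θ ∧ LowerReturn a p.1 p.2}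

/-! ### Twisted semigroup algebras -/

variable {K : Type} [Field K]

/-- The underlying vector space of the semigroup algebra `k[P_n]`. -/
abbrev PAlg (n : ℕ) (K : Type) [Field K] := PElt n →₀ K

/-- The twisted multiplication on `k[P_n]`: on basis elements,
`a ∘ b = ξ^{m(a,b)} · (ab)`, extended bilinearly. -/
noncomputable def twistMul {n : ℕ} (ξ : K) (f g : PAlg n K) : PAlg n K :=
  f.sum fun a ca => g.sum fun b cb =>
    Finsupp.single (pmul a b) (ca * cb * ξ ^ floatCount a b)

/-- The twisted variant `S^ξ`: the subsemigroup of `(k[S], ∘)` generated by (the basis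
elements corresponding to) `S`. -/
def TwistedVariant {n : ℕ} (ξ : K) (S : Set (PElt n)) : Set (PAlg n K) :=
  ⋂₀ {T : Set (PAlg n K) | (∀ a ∈ S, Finsupp.single a (1 : K) ∈ T) ∧
      ∀ f ∈ T, ∀ g ∈ T, twistMul ξ f g ∈ T}

/-- The idempotents of a set of elements of the twisted algebra. -/
def EsetTwist {n : ℕ} (ξ : K) (X : Set (PAlg n K)) : Set (PAlg n K) :=
  {f ∈ X | twistMul ξ f f = f}

/-- `⟨S^ξ, ξ·1⟩ = {ξ^i·α : i ∈ ℕ, α ∈ S}`. -/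
def TwistNat {n : ℕ} (ξ : K) (S : Set (PElt n)) : Set (PAlg n K) :=
  {f | ∃ (i : ℕ), ∃ a ∈ S, f = Finsupp.single a (ξ ^ i)}

/-- `⟨S^ξ, ξ·1, ξ⁻¹·1⟩ = {ξ^i·α : i ∈ ℤ, α ∈ S}`. -/
def TwistInt {n : ℕ} (ξ : K) (S : Set (PElt n)) : Set (PAlg n K) :=
  {f | ∃ (i : ℤ), ∃ a ∈ S, f = Finsupp.single a (ξ ^ i)}

/-! ### Idempotent statistics of the Jones monoid -/

/-- The number of cycle components of `Γ(a)`. -/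
noncomputable def numCycles {n : ℕ} (a : PElt n) : ℕ :=
  Nat.card {θ : Set (Fin n) // IsCycleComp a θ}

/-- The number of path components of `Γ(a)`. -/
noncomputable def numPaths {n : ℕ} (a : PElt n) : ℕ :=
  Nat.card {θ : Set (Fin n) // IsPathComp a θ}

/-- `E_{n;c,p}`: the idempotents of the Jones monoid `J_n` with `c` cycle components and
`p` path components (out-of-range indices give the empty set). -/
def EJcp (n : ℕ) (c p : ℤ) : Set (PElt n) :=
  {a ∈ Jones n | pmul a a = a ∧ (numCycles a : ℤ) = c ∧ (numPaths a : ℤ) = p}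

/-- `e_{n;c,p} = |E_{n;c,p}|`. -/
noncomputable def eJ (n : ℕ) (c p : ℤ) : ℕ := Nat.card (EJcp n c p)

/-- `e_{n;·,p} = Σ_c e_{n;c,p}`: the number of idempotents of `J_n` of rank `p`. -/
noncomputable def eJdot (n : ℕ) (p : ℤ) : ℕ :=
  Nat.card {a : PElt n | a ∈ Jones n ∧ pmul a a = a ∧ (numPaths a : ℤ) = p}

/-- `S^{(1)}_{n;c,p} = Σ_{α ∈ E_{n;c,p}} Σ_{θ ∈ Θ(α)} (u_θ + l_θ)`. -/
noncomputable def S1 (n : ℕ) (c p : ℤ) : ℕ :=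
  ∑ᶠ a ∈ EJcp n c p, ∑ᶠ θ ∈ ThetaSet a, (uRet a θ + lRet a θ)

/-- `S^{(2)}_{n;c,p} = Σ_{α ∈ E_{n;c,p}} Σ_{θ₁ ≠ θ₂ ∈ Θ(α)} u_{θ₁}·l_{θ₂}`
(the inner sum over ordered pairs of distinct cycles). -/
noncomputable def S2 (n : ℕ) (c p : ℤ) : ℕ :=
  ∑ᶠ a ∈ EJcp n c p, ∑ᶠ q ∈ {q : Set (Fin n) × Set (Fin n) |
      q.1 ∈ ThetaSet a ∧ q.2 ∈ ThetaSet a ∧ q.1 ≠ q.2}, uRet a q.1 * lRet a q.2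

/-- `S^{(1)}_{n;·,p}`. -/
noncomputable def S1dot (n : ℕ) (p : ℤ) : ℕ :=
  ∑ᶠ a ∈ {a : PElt n | a ∈ Jones n ∧ pmul a a = a ∧ (numPaths a : ℤ) = p},
    ∑ᶠ θ ∈ ThetaSet a, (uRet a θ + lRet a θ)

/-- `S^{(2)}_{n;·,p}`. -/
noncomputable def S2dot (n : ℕ) (p : ℤ) : ℕ :=
  ∑ᶠ a ∈ {a : PElt n | a ∈ Jones n ∧ pmul a a = a ∧ (numPaths a : ℤ) = p},
    ∑ᶠ q ∈ {q : Set (Fin n) × Set (Fin n) |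
      q.1 ∈ ThetaSet a ∧ q.2 ∈ ThetaSet a ∧ q.1 ≠ q.2}, uRet a q.1 * lRet a q.2

/-!
A Jones diagram consists of two noncrossing involutions `σ`, `τ` of its points (the upper and the
lower row), its through strings joining the fixed points of `σ` to those of `τ` in order. It is
idempotent if and only if no two fixed points of `σ` lie in the same orbit of the group generated by
`σ` and `τ`: a parity count then puts exactly one fixed point of `τ` in each such orbit, and a
discrete Jordan curve argument shows that the resulting matching is order preserving. So each orbit
with a fixed point is a path component and the rank of an idempotent is its number of through
strings.

In rank `n - 4` each row has two arcs, and idempotency says that every arc of each row shares an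
endpoint with an arc of the other row. A row is determined by the left endpoints of its arcs, so
that the idempotents correspond to certain pairs of pairs of numbers. Deleting the leftmost point if
no arc starts there gives the recursion `e (n + 1) = e n + r (n + 1)`, where `r` counts the pairs of
rows one of which has an arc from the leftmost point. For `n ≥ 6` there are nine such pairs on
`n + 1` points that do not already occur on `n` points: they have left endpoints `i < j` and
`i' < j'` with `(i, i')` one of `(0, 0)`, `(0, 1)`, `(1, 0)` and `(j, j')` one of `(n - 1, n - 1)`,
`(n - 2, n - 1)`, `(n - 1, n - 2)`. Hence `r n = 9 * n - 22`.
-/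

section Involutions

variable {α : Type*} {σ τ : α → α}

/-- The equivalence relation generated by `x ∼ σ x` and `x ∼ τ x`; for involutions, its classes are
the orbits of the (dihedral) group generated by `σ` and `τ`. -/
def Linked (σ τ : α → α) : α → α → Prop := EqvGen fun x y => y = σ x ∨ y = τ x

/-- Every two-element orbit of `σ` (an arc) contains an endpoint of an arc of `τ`. -/
def ArcsMeet (σ τ : α → α) : Prop := ∀ x, σ x ≠ x → τ x ≠ x ∨ τ (σ x) ≠ σ x

namespace Linked

theorem refl (x : α) : Linked σ τ x x := EqvGen.refl x

theorem symm {x y : α} (h : Linked σ τ x y) : Linked σ τ y x := EqvGen.symm _ _ h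

theorem trans {x y z : α} (h : Linked σ τ x y) (h' : Linked σ τ y z) : Linked σ τ x z :=
  EqvGen.trans _ _ _ h h'

theorem left (x : α) : Linked σ τ x (σ x) := EqvGen.rel _ _ (.inl rfl)

theorem right (x : α) : Linked σ τ x (τ x) := EqvGen.rel _ _ (.inr rfl)

theorem induction {r : Setoid α} (hσ : ∀ x, r x (σ x)) (hτ : ∀ x, r x (τ x)) {x y : α}
    (h : Linked σ τ x y) : r x y := by
  refine Setoid.eqvGen_le (s := r) ?_ h
  rintro x _ (rfl | rfl)
  exacts [hσ x, hτ x]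

theorem comm {x y : α} : Linked σ τ x y ↔ Linked τ σ x y := by
  simp only [Linked, or_comm]

theorem mem_iff (hσ : σ.Involutive) (hτ : τ.Involutive) {S : Set α} (hSσ : S.MapsTo σ S)
    (hSτ : S.MapsTo τ S) {x y : α} (h : Linked σ τ x y) : x ∈ S ↔ y ∈ S := by
  have iff_of_mapsTo {ρ : α → α} (hρ : ρ.Involutive) (hSρ : S.MapsTo ρ S) (x : α) :
      x ∈ S ↔ ρ x ∈ S :=
    ⟨fun hx => hSρ hx, fun hx => hρ x ▸ hSρ hx⟩
  exact h.induction (r := Setoid.comap (· ∈ S) ⟨Iff, Iff.refl, Iff.symm, Iff.trans⟩)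
    (iff_of_mapsTo hσ hSσ) (iff_of_mapsTo hτ hSτ)

end Linked

theorem even_card_of_fixed_point_free {S : Finset α} (hσ : σ.Involutive)
    (hS : ∀ x ∈ S, σ x ∈ S) (hfree : ∀ x ∈ S, σ x ≠ x) : Even S.card := by
  have hsum : ∑ _x ∈ S, (1 : ZMod 2) = 0 :=
    Finset.sum_involution (fun x _ => σ x) (fun _ _ => by decide) (fun x hx _ => hfree x hx) hS
      fun x _ => hσ x
  simpa [ZMod.natCast_eq_zero_iff_even] using hsum

theorem even_card_iff_even_card_fixed [DecidableEq α] {S : Finset α} (hσ : σ.Involutive)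
    (hS : ∀ x ∈ S, σ x ∈ S) : Even S.card ↔ Even {x ∈ S | σ x = x}.card := by
  have hmoved : Even {x ∈ S | σ x ≠ x}.card := by
    refine even_card_of_fixed_point_free hσ (fun x hx => ?_) fun x hx => (Finset.mem_filter.1 hx).2
    simp only [Finset.mem_filter, hσ x] at hx ⊢
    exact ⟨hS x hx.1, hx.2.symm⟩
  rw [← Finset.card_filter_add_card_filter_not (fun x => σ x = x), Nat.even_add]
  exact iff_true_right hmoved

/-- If `x` were on an arc of `σ` missing all arcs of `τ`, that arc would be a whole class. -/
theorem arcsMeet_of_forall_linked (hσ : σ.Involutive) (hτ : τ.Involutive)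
    (h : ∀ x, τ x = x → ∃ i, σ i = i ∧ Linked σ τ i x) : ArcsMeet σ τ := by
  intro x hx
  by_contra! hfix
  obtain ⟨i, hi, hix⟩ := h x hfix.1
  have harc : i ∈ ({x, σ x} : Set α) := by
    refine (hix.mem_iff hσ hτ ?_ ?_).2 (.inl rfl)
    · rintro _ (rfl | rfl)
      exacts [.inr rfl, .inl (hσ _)]
    · rintro _ (rfl | rfl)
      exacts [.inl hfix.1, .inr hfix.2]
  rcases harc with rfl | rfl
  · exact hx hi
  · exact hx (hi.symm.trans (hσ x))

variable [Fintype α] [DecidableEq α]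

/-- The points that `σ` does not fix. -/
def moved (σ : α → α) : Finset α := {x | σ x ≠ x}

@[simp] theorem mem_moved {x : α} : x ∈ moved σ ↔ σ x ≠ x := by simp [moved]

theorem moved_eq_of_card_eq_four (hσ : σ.Involutive) (hcard : (moved σ).card = 4) {x y : α}
    (hx : σ x ≠ x) (hy : σ y ≠ y) (hyx : y ≠ x) (hyσ : y ≠ σ x) :
    moved σ = {x, σ x, y, σ y} := by
  have hσy : σ y ≠ x := fun h => hyσ (by rw [← h, hσ y])
  refine (Finset.eq_of_subset_of_card_le ?_ ?_).symm
  · simp only [Finset.insert_subset_iff, Finset.singleton_subset_iff, mem_moved, hσ _]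
    exact ⟨hx, hx.symm, hy, hy.symm⟩
  · rw [hcard]
    simp [hx.symm, hyx.symm, hσy.symm, hyσ.symm, hσ.injective.ne hyx.symm, hy.symm]

theorem exists_moved_ne (hcard : 2 < (moved σ).card) (x y : α) :
    ∃ z, σ z ≠ z ∧ z ≠ x ∧ z ≠ y := by
  obtain ⟨z, hz, hxy⟩ := Finset.exists_mem_notMem_of_card_lt_card
    ((Finset.card_le_two (a := x) (b := y)).trans_lt hcard)
  simp only [Finset.mem_insert, Finset.mem_singleton, not_or] at hxy
  exact ⟨z, mem_moved.1 hz, hxy⟩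

theorem eq_of_linked_of_fixed (hσ : σ.Involutive) (hτ : τ.Involutive) (cσ : (moved σ).card = 4)
    (cτ : (moved τ).card = 4) (hστ : ArcsMeet σ τ) (hτσ : ArcsMeet τ σ) {i j : α} (hi : σ i = i)
    (hj : σ j = j) (h : Linked σ τ i j) : i = j := by
  have eq_of_closed (S : Set α) (hS : ∀ s ∈ S, σ s ∈ S ∧ τ s ∈ S) (hiS : i ∈ S)
      (hfix : ∀ s ∈ S, σ s = s → s = i) : i = j :=
    (hfix j ((h.mem_iff hσ hτ (fun s hs => (hS s hs).1) fun s hs => (hS s hs).2).1 hiS) hj).symm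
  obtain hτi | hτi := eq_or_ne (τ i) i
  · exact eq_of_closed {i} (by simp [hi, hτi]) rfl (by simp)
  obtain ⟨x, hix⟩ : ∃ x, τ i = x := ⟨_, rfl⟩
  have hxi : τ x = i := hix ▸ hτ i
  have hσx : σ x ≠ x := by grind [hτσ i hτi]
  obtain ⟨y, hxy⟩ : ∃ y, σ x = y := ⟨_, rfl⟩
  have hyx : σ y = x := hxy ▸ hσ x
  obtain hy | hy := eq_or_ne (τ y) y
  · exact eq_of_closed {i, x, y} (by grind) (by simp) (by grind)
  obtain ⟨z, hyz⟩ : ∃ z, τ y = z := ⟨_, rfl⟩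
  have hzy : τ z = y := hyz ▸ hτ y
  have hmoved : moved τ = {i, x, y, z} := by
    have := moved_eq_of_card_eq_four hτ cτ (x := i) (y := y) (by grind) (by grind) (by grind)
      (by grind)
    rwa [hix, hyz] at this
  have mem_of_moved {w : α} (hw : τ w ≠ w) : w ∈ ({i, x, y, z} : Finset α) := by
    rwa [← hmoved, mem_moved]
  -- The second arc of `σ` has to meet the second arc of `τ`, and can do so only in `z`.
  have hσz : σ z ≠ z := by
    obtain ⟨u, hu, hux, huy⟩ := exists_moved_ne (σ := σ) (by lia) x y
    have hσu : σ (σ u) = u := hσ u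
    grind [hστ u hu]
  obtain ⟨w, hzw⟩ : ∃ w, σ z = w := ⟨_, rfl⟩
  have hwz : σ w = z := hzw ▸ hσ z
  have hw : τ w = w := by grind
  exact eq_of_closed {i, x, y, z, w} (by simp [*]) (by simp)
    (by simp [hxy, hyx, hzw, hwz, hxy ▸ hσx, (hxy ▸ hσx).symm, hzw ▸ hσz, (hzw ▸ hσz).symm])

end Involutions

/-- A row of a planar diagram: an involution whose two-element orbits (arcs) do not cross and whose
fixed points (the feet of through strings) lie under no arc. -/
structure IsCapDiagram {α : Type*} [LT α] (σ : α → α) : Prop where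
  involutive : σ.Involutive
  nested : ∀ {i k}, i < k → k < σ i → σ k ≠ k ∧ i < σ k ∧ σ k < σ i

section CapDiagram

variable {α : Type*} [LinearOrder α] {σ τ : α → α}

theorem IsCapDiagram.even_card_lt_fixed_iff (hσ : IsCapDiagram σ) {Q : Finset α}
    (hQ : ∀ q ∈ Q, σ q ∈ Q) {i : α} (hi : σ i = i) :
    Even {q ∈ Q | q < i}.card ↔ Even {q ∈ Q | q < i ∧ σ q = q}.card := by
  rw [even_card_iff_even_card_fixed hσ.involutive, Finset.filter_filter]
  intro q hq
  rw [Finset.mem_filter] at hq ⊢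
  refine ⟨hQ q hq.1, lt_of_not_ge fun hle => ?_⟩
  obtain rfl | hlt := hle.eq_or_lt
  · exact hq.2.ne ((hσ.involutive q).symm.trans hi)
  · exact (hσ.nested hq.2 hlt).1 hi

theorem IsCapDiagram.even_card_lt_apply_iff (hσ : IsCapDiagram σ) {Q : Finset α}
    (hQ : ∀ q ∈ Q, σ q ∈ Q) {x : α} (hx : x ∉ Q) :
    Even {q ∈ Q | q < σ x}.card ↔ Even {q ∈ Q | q < x}.card := by
  wlog hlt : x < σ x generalizing x
  · obtain heq | hgt := (not_lt.1 hlt).eq_or_lt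
    · rw [heq]
    · have hσx : σ x ∉ Q := fun h => hx (hσ.involutive x ▸ hQ _ h)
      simpa only [hσ.involutive x, iff_comm] using this hσx (by rwa [hσ.involutive x])
  have hunder : Even {q ∈ Q | x < q ∧ q < σ x}.card := by
    refine even_card_of_fixed_point_free hσ.involutive (fun q hq => ?_) fun q hq => ?_ <;>
      rw [Finset.mem_filter] at hq
    · exact Finset.mem_filter.2 ⟨hQ q hq.1, (hσ.nested hq.2.1 hq.2.2).2⟩
    · exact (hσ.nested hq.2.1 hq.2.2).1
  have hsplit : {q ∈ Q | q < σ x} = {q ∈ Q | q < x} ∪ {q ∈ Q | x < q ∧ q < σ x} := by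
    grind
  rw [hsplit, Finset.card_union_of_disjoint (by grind [Finset.disjoint_left]), Nat.even_add]
  exact iff_true_right hunder

/-- A discrete Jordan curve argument: an arc from `x` jumps over whole arcs of `Q`, so the parity of
the number of points of `Q` to the left of `x` is constant along the class of `x`. -/
theorem Linked.even_card_lt_iff (hσ : IsCapDiagram σ) (hτ : IsCapDiagram τ) {Q : Finset α}
    (hQσ : ∀ q ∈ Q, σ q ∈ Q) (hQτ : ∀ q ∈ Q, τ q ∈ Q) {x y : α} (h : Linked σ τ x y)
    (hx : x ∉ Q) : Even {q ∈ Q | q < x}.card ↔ Even {q ∈ Q | q < y}.card := by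
  have hy : y ∉ Q := (h.mem_iff hσ.involutive hτ.involutive (S := Q) hQσ hQτ).not.1 hx
  have mapsTo {ρ : α → α} (hρ : IsCapDiagram ρ) (hQρ : ∀ q ∈ Q, ρ q ∈ Q) :
      Set.MapsTo ρ {z | z ∉ Q ∧ Even {q ∈ Q | q < z}.card}
        {z | z ∉ Q ∧ Even {q ∈ Q | q < z}.card} := fun z hz =>
    ⟨fun h => hz.1 (hρ.involutive z ▸ hQρ _ h), (hρ.even_card_lt_apply_iff hQρ hz.1).2 hz.2⟩
  simpa [hx, hy] using
    h.mem_iff hσ.involutive hτ.involutive (mapsTo hσ hQσ) (mapsTo hτ hQτ)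

end CapDiagram

section LinkClass

variable {α : Type*} {σ τ : α → α}

open Classical in
/-- The equivalence class of `i` under `Linked σ τ`. -/
noncomputable def linkClass [Fintype α] (σ τ : α → α) (i : α) : Finset α := {q | Linked σ τ i q}

@[simp] theorem mem_linkClass [Fintype α] {i q : α} : q ∈ linkClass σ τ i ↔ Linked σ τ i q := by
  simp [linkClass]

theorem apply_left_mem_linkClass [Fintype α] {i : α} :
    ∀ q ∈ linkClass σ τ i, σ q ∈ linkClass σ τ i := by
  simpa using fun q (hq : Linked σ τ i q) => hq.trans (.left q)

theorem apply_right_mem_linkClass [Fintype α] {i : α} :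
    ∀ q ∈ linkClass σ τ i, τ q ∈ linkClass σ τ i := by
  simpa using fun q (hq : Linked σ τ i q) => hq.trans (.right q)

theorem exists_fixed_linked [Finite α] (hσ : σ.Involutive) (hτ : τ.Involutive)
    (hsep : ∀ i j, σ i = i → σ j = j → Linked σ τ i j → i = j) {i : α} (hi : σ i = i) :
    ∃ j, τ j = j ∧ Linked σ τ i j := by
  classical
  have := Fintype.ofFinite α
  have hfixed : {q ∈ linkClass σ τ i | σ q = q} = {i} := by
    ext q
    rw [Finset.mem_filter, mem_linkClass, Finset.mem_singleton]
    exact ⟨fun h => (hsep i q hi h.2 h.1).symm, by rintro rfl; exact ⟨.refl _, hi⟩⟩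
  have hodd : ¬ Even {q ∈ linkClass σ τ i | τ q = q}.card := by
    rw [← even_card_iff_even_card_fixed hτ apply_right_mem_linkClass,
      even_card_iff_even_card_fixed hσ apply_left_mem_linkClass, hfixed, Finset.card_singleton]
    exact Nat.not_even_one
  obtain ⟨j, hj⟩ : {q ∈ linkClass σ τ i | τ q = q}.Nonempty :=
    Finset.nonempty_of_ne_empty fun h => hodd (by rw [h]; exact Even.zero)
  rw [Finset.mem_filter, mem_linkClass] at hj
  exact ⟨j, hj.2, hj.1⟩

end LinkClass

section Through

open Function (fixedPoints)

variable {α : Type*} [LinearOrder α] [Finite α] {σ τ : α → α}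

theorem exists_fixed_lt_linked (hσ : IsCapDiagram σ) (hτ : IsCapDiagram τ)
    (hsep : ∀ i j, σ i = i → σ j = j → Linked σ τ i j → i = j) {i i' j' : α} (hi : σ i = i)
    (hi' : σ i' = i') (hj' : τ j' = j') (hlt : i < i') (h : Linked σ τ i' j') :
    ∃ q < j', τ q = q ∧ Linked σ τ i q := by
  have := Fintype.ofFinite α
  have hi'Q : i' ∉ linkClass σ τ i := fun hmem =>
    hlt.ne (hsep i i' hi hi' (mem_linkClass.1 hmem))
  have hfixed : {q ∈ linkClass σ τ i | q < i' ∧ σ q = q} = {i} := by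
    ext q
    rw [Finset.mem_filter, mem_linkClass, Finset.mem_singleton]
    exact ⟨fun hq => (hsep i q hi hq.2.2 hq.1).symm, by rintro rfl; exact ⟨.refl _, hlt, hi⟩⟩
  have hodd : ¬ Even {q ∈ linkClass σ τ i | q < j' ∧ τ q = q}.card := by
    rw [← hτ.even_card_lt_fixed_iff apply_right_mem_linkClass hj',
      ← h.even_card_lt_iff hσ hτ apply_left_mem_linkClass apply_right_mem_linkClass hi'Q,
      hσ.even_card_lt_fixed_iff apply_left_mem_linkClass hi', hfixed, Finset.card_singleton]
    exact Nat.not_even_one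
  obtain ⟨q, hq⟩ : {q ∈ linkClass σ τ i | q < j' ∧ τ q = q}.Nonempty :=
    Finset.nonempty_of_ne_empty fun h => hodd (by rw [h]; exact Even.zero)
  rw [Finset.mem_filter, mem_linkClass] at hq
  exact ⟨q, hq.2.1, hq.2.2, hq.1⟩

theorem linked_orderIso (hσ : IsCapDiagram σ) (hτ : IsCapDiagram τ)
    (hsep : ∀ i j, σ i = i → σ j = j → Linked σ τ i j → i = j)
    (e : fixedPoints σ ≃o fixedPoints τ) (i : fixedPoints σ) : Linked σ τ i (e i) := by
  have hpartner (i : fixedPoints σ) : ∃ j : fixedPoints τ, Linked σ τ i j := by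
    obtain ⟨j, hj, hij⟩ := exists_fixed_linked hσ.involutive hτ.involutive hsep i.2
    exact ⟨⟨j, hj⟩, hij⟩
  choose f hf using hpartner
  have hinj : Function.Injective f := fun i i' h =>
    Subtype.ext (hsep i i' i.2 i'.2 ((hf i).trans (h ▸ (hf i').symm)))
  have hsurj : Function.Surjective f :=
    (Finite.injective_iff_surjective_of_equiv e.toEquiv).1 hinj
  have hmono : StrictMono f := by
    intro i i' hlt
    obtain ⟨q, hqlt, hq, hiq⟩ := exists_fixed_lt_linked hσ hτ hsep i.2 i'.2 (f i').2 hlt (hf i')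
    obtain ⟨k, hk⟩ := hsurj ⟨q, hq⟩
    have hkq : Linked σ τ k q := by simpa [hk] using hf k
    have hik : i = k := Subtype.ext (hsep i k i.2 k.2 (hiq.trans hkq.symm))
    rw [hik, hk]
    exact hqlt
  have hfe : hmono.orderIsoOfSurjective f hsurj = e := Subsingleton.elim _ _
  rw [← hfe]
  exact hf i

end Through

section Product

variable {n : ℕ} {a b : PElt n}

theorem stackSetoid_le {s : Setoid (TV n)} (ha : a ≤ s.comap upEmb) (hb : b ≤ s.comap downEmb) :
    stackSetoid a b ≤ s := by
  refine Setoid.eqvGen_le ?_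
  rintro _ _ (⟨p, q, h, rfl, rfl⟩ | ⟨p, q, h, rfl, rfl⟩)
  exacts [ha h, hb h]

theorem stackSetoid_upEmb {x y : PV n} (h : a.r x y) :
    (stackSetoid a b).r (upEmb x) (upEmb y) :=
  EqvGen.rel _ _ (.inl ⟨x, y, h, rfl, rfl⟩)

theorem stackSetoid_downEmb {x y : PV n} (h : b.r x y) :
    (stackSetoid a b).r (downEmb x) (downEmb y) :=
  EqvGen.rel _ _ (.inr ⟨x, y, h, rfl, rfl⟩)

theorem gconn_symm {i j : Fin n} (h : gconn a i j) : gconn a j i := EqvGen.symm _ _ h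

theorem gconn_trans {i j k : Fin n} (h : gconn a i j) (h' : gconn a j k) : gconn a i k :=
  EqvGen.trans _ _ _ h h'

theorem gconn_of_upper {i j : Fin n} (h : a.r (.inl i) (.inl j)) : gconn a i j := by
  obtain rfl | hij := eq_or_ne i j
  exacts [.refl i, .rel _ _ (.inl ⟨hij, h⟩)]

theorem gconn_of_lower {i j : Fin n} (h : a.r (.inr i) (.inr j)) : gconn a i j := by
  obtain rfl | hij := eq_or_ne i j
  exacts [.refl i, .rel _ _ (.inr ⟨hij, h⟩)]

theorem stackSetoid_middle_of_gconn {i j : Fin n} (h : gconn a i j) :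
    (stackSetoid a a).r (.inr (.inl i)) (.inr (.inl j)) := by
  refine Setoid.eqvGen_le (s := (stackSetoid a a).comap fun k => .inr (.inl k)) ?_ h
  rintro i j (h | h)
  exacts [stackSetoid_downEmb h.2, stackSetoid_upEmb h.2]

/-- The middle vertices in the component of a vertex of the stack of `a` on itself. -/
def middleTrace (a : PElt n) : TV n → Set (Fin n)
  | .inl i => {m | ∃ k, a.r (.inl i) (.inr k) ∧ gconn a k m}
  | .inr (.inl k) => {m | gconn a k m}
  | .inr (.inr j) => {m | ∃ k, a.r (.inr j) (.inl k) ∧ gconn a k m}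

theorem stackSetoid_le_ker_middleTrace : stackSetoid a a ≤ Setoid.ker (middleTrace a) := by
  have upper_subset {p q : PV n} (h : a.r p q) :
      middleTrace a (upEmb p) ⊆ middleTrace a (upEmb q) := by
    obtain x | k := p <;> obtain y | l := q
    · exact fun m ⟨k, hk, hm⟩ => ⟨k, a.trans (a.symm h) hk, hm⟩
    · exact fun m ⟨k, hk, hm⟩ => gconn_trans (gconn_of_lower (a.trans (a.symm h) hk)) hm
    · exact fun m hm => ⟨k, a.symm h, hm⟩
    · exact fun m hm => gconn_trans (gconn_of_lower (a.symm h)) hm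
  have lower_subset {p q : PV n} (h : a.r p q) :
      middleTrace a (downEmb p) ⊆ middleTrace a (downEmb q) := by
    obtain k | x := p <;> obtain l | y := q
    · exact fun m hm => gconn_trans (gconn_of_upper (a.symm h)) hm
    · exact fun m hm => ⟨k, a.symm h, hm⟩
    · exact fun m ⟨k, hk, hm⟩ => gconn_trans (gconn_of_upper (a.trans (a.symm h) hk)) hm
    · exact fun m ⟨k, hk, hm⟩ => ⟨k, a.trans (a.symm h) hk, hm⟩
  exact stackSetoid_le (fun _ _ h => (upper_subset h).antisymm (upper_subset (a.symm h)))
    fun _ _ h => (lower_subset h).antisymm (lower_subset (a.symm h))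

/-- The block of `a` through the outer vertices in the component of a vertex of the stack of `a` on
itself. -/
def outerTrace (a : PElt n) : TV n → Set (PV n)
  | .inl i => {x | a.r (.inl i) x}
  | .inr (.inl k) => {x | ∃ i, activeDown a i ∧ gconn a k i ∧ a.r (.inl i) x}
  | .inr (.inr j) => {x | a.r (.inr j) x}

theorem stackSetoid_le_ker_outerTrace (hconn : ∀ i j, a.r (.inl i) (.inr j) → gconn a i j)
    (hsep : ∀ i i', activeDown a i → activeDown a i' → gconn a i i' → a.r (.inl i) (.inl i')) :
    stackSetoid a a ≤ Setoid.ker (outerTrace a) := by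
  have upper_subset {p q : PV n} (h : a.r p q) :
      outerTrace a (upEmb p) ⊆ outerTrace a (upEmb q) := by
    obtain x | k := p <;> obtain y | l := q
    · exact fun z hz => a.trans (a.symm h) hz
    · exact fun z hz => ⟨x, ⟨l, h⟩, gconn_symm (hconn x l h), hz⟩
    · exact fun z ⟨i, hi, hki, hz⟩ => a.trans
        (hsep y i ⟨k, a.symm h⟩ hi (gconn_trans (hconn y k (a.symm h)) hki)) hz
    · exact fun z ⟨i, hi, hki, hz⟩ => ⟨i, hi, gconn_trans (gconn_of_lower (a.symm h)) hki, hz⟩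
  have lower_subset {p q : PV n} (h : a.r p q) :
      outerTrace a (downEmb p) ⊆ outerTrace a (downEmb q) := by
    obtain k | x := p <;> obtain l | y := q
    · exact fun z ⟨i, hi, hki, hz⟩ => ⟨i, hi, gconn_trans (gconn_of_upper (a.symm h)) hki, hz⟩
    · exact fun z ⟨i, hi, hki, hz⟩ => a.trans (a.symm h) (a.trans (hsep k i ⟨y, h⟩ hi hki) hz)
    · exact fun z hz => ⟨l, ⟨x, a.symm h⟩, .refl l, a.trans (a.symm h) hz⟩
    · exact fun z hz => a.trans (a.symm h) hz
  exact stackSetoid_le (fun _ _ h => (upper_subset h).antisymm (upper_subset (a.symm h)))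
    fun _ _ h => (lower_subset h).antisymm (lower_subset (a.symm h))

theorem pmul_self_eq_iff : pmul a a = a ↔
    (∀ i j, a.r (.inl i) (.inr j) → gconn a i j) ∧
      ∀ i i', activeDown a i → activeDown a i' → gconn a i i' → a.r (.inl i) (.inl i') := by
  refine ⟨fun hidem => ?_, fun ⟨hconn, hsep⟩ => ?_⟩
  · have block_of_stack {x y : PV n} (h : (stackSetoid a a).r (outEmb x) (outEmb y)) : a.r x y :=
      hidem.le h
    have hconn (i j : Fin n) (hij : a.r (.inl i) (.inr j)) : gconn a i j := by
      have hstack : (stackSetoid a a).r (.inl i) (.inr (.inr j)) := hidem.ge hij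
      have hi : i ∈ middleTrace a (.inr (.inr j)) := ⟨i, a.symm hij, .refl i⟩
      rw [← show _ = _ from stackSetoid_le_ker_middleTrace hstack] at hi
      obtain ⟨k, hik, hki⟩ := hi
      exact gconn_trans (gconn_symm hki) (gconn_of_lower (a.trans (a.symm hik) hij))
    refine ⟨hconn, fun i i' ⟨j, hj⟩ ⟨j', hj'⟩ hii' =>
      block_of_stack (x := .inl i) (y := .inl i') ?_⟩
    have hjj' : gconn a j j' :=
      gconn_trans (gconn_symm (hconn i j hj)) (gconn_trans hii' (hconn i' j' hj'))
    exact Setoid.trans' _ (stackSetoid_upEmb hj) (Setoid.trans' _ (stackSetoid_middle_of_gconn hjj')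
      (Setoid.symm' _ (stackSetoid_upEmb hj')))
  · refine le_antisymm (fun x y h => ?_) fun x y h => ?_
    · have hxy : outerTrace a (outEmb x) = outerTrace a (outEmb y) :=
        stackSetoid_le_ker_outerTrace hconn hsep h
      have hy : y ∈ outerTrace a (outEmb y) := by cases y <;> exact a.refl _
      rw [← hxy] at hy
      cases x <;> exact hy
    · have through {i j : Fin n} (hij : a.r (.inl i) (.inr j)) :
          (stackSetoid a a).r (.inl i) (.inr (.inr j)) :=
        Setoid.trans' _ (stackSetoid_upEmb hij) (Setoid.trans' _
          (stackSetoid_middle_of_gconn (gconn_symm (hconn i j hij))) (stackSetoid_downEmb hij))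
      obtain x | x := x <;> obtain y | y := y
      exacts [stackSetoid_upEmb h, through h, Setoid.symm' _ (through (a.symm h)),
        stackSetoid_downEmb h]

end Product

section Jones

open Function (fixedPoints)

variable {n : ℕ} {a a' : PElt n} {σ τ : Fin n → Fin n}

theorem blockCard_eq_two_iff {x : PV n} :
    blockCard a x = 2 ↔ ∃ y ≠ x, ∀ z, a.r x z ↔ z = x ∨ z = y := by
  change Nat.card {z | a.r x z} = 2 ↔ _
  rw [Nat.card_coe_set_eq, Set.ncard_eq_two]
  constructor
  · rintro ⟨u, v, huv, hblock⟩
    have mem (z : PV n) : a.r x z ↔ z = u ∨ z = v := Set.ext_iff.1 hblock z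
    obtain rfl | rfl := (mem x).1 (a.refl x)
    exacts [⟨v, huv.symm, mem⟩, ⟨u, huv, fun z => (mem z).trans or_comm⟩]
  · rintro ⟨y, hyx, mem⟩
    exact ⟨x, y, hyx.symm, Set.ext mem⟩

theorem ordIdx_injective : Function.Injective (ordIdx n) := by
  rintro (x | x) (y | y) h <;>
    simp only [ordIdx, Sum.inl.injEq, Sum.inr.injEq, reduceCtorEq] at h ⊢ <;> lia

theorem IsPlanar.nested (ha : IsPlanar a) {w x y z : PV n} (hwx : ordIdx n w < ordIdx n x)
    (hxy : ordIdx n x < ordIdx n y) (h : a.r w y) (h' : a.r x z) (hw : ¬ a.r w x) :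
    ordIdx n w < ordIdx n z ∧ ordIdx n z < ordIdx n y := by
  have hzw : ordIdx n z ≠ ordIdx n w := fun heq =>
    hw (a.symm (ordIdx_injective heq ▸ h'))
  have hzy : ordIdx n z ≠ ordIdx n y := fun heq =>
    hw (a.trans h (a.symm (ordIdx_injective heq ▸ h')))
  refine ⟨lt_of_not_ge fun hle => ?_, lt_of_not_ge fun hle => ?_⟩
  · exact ha ⟨z, w, x, y, hle.lt_of_ne hzw, hwx, hxy, a.symm h', h,
      fun hz => hw (a.trans (a.symm hz) (a.symm h'))⟩
  · exact ha ⟨w, x, y, z, hwx, hxy, hle.lt_of_ne hzy.symm, h, h', hw⟩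

/-- The reflection of a diagram in a horizontal line. -/
abbrev reflect (a : PElt n) : PElt n := Setoid.comap Sum.swap a

theorem blockCard_reflect (x : PV n) : blockCard (reflect a) x = blockCard a x.swap :=
  Nat.card_congr ((Equiv.sumComm _ _).subtypeEquiv fun _ => Iff.rfl)

theorem reflect_mem_jones (ha : a ∈ Jones n) : reflect a ∈ Jones n := by
  refine ⟨?_, fun x => (blockCard_reflect x).trans (ha.2 _)⟩
  rintro ⟨w, x, y, z, hwx, hxy, hyz, hwy, hxz, hne⟩
  have ordIdx_swap {u v : PV n} (h : ordIdx n u < ordIdx n v) :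
      ordIdx n v.swap < ordIdx n u.swap := by
    obtain u | u := u <;> obtain v | v := v <;>
      simp only [ordIdx, Sum.swap_inl, Sum.swap_inr] at h ⊢ <;> lia
  exact ha.1 ⟨z.swap, y.swap, x.swap, w.swap, ordIdx_swap hyz, ordIdx_swap hxy, ordIdx_swap hwx,
    a.symm hxz, a.symm hwy, fun h => hne (a.trans hwy (a.trans (a.symm h) (a.symm hxz)))⟩

theorem exists_upper_row (ha : a ∈ Jones n) : ∃ σ : Fin n → Fin n, IsCapDiagram σ ∧
    ∀ i j, a.r (.inl i) (.inl j) ↔ j = i ∨ j = σ i := by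
  have hmate (i : Fin n) : ∃ j, ∀ k, a.r (.inl i) (.inl k) ↔ k = i ∨ k = j := by
    obtain ⟨j | j, -, mem⟩ := blockCard_eq_two_iff.1 (ha.2 (.inl i))
    exacts [⟨j, by simpa using fun k => mem (.inl k)⟩, ⟨i, by simpa using fun k => mem (.inl k)⟩]
  choose σ hσ using hmate
  refine ⟨σ, ⟨fun i => ?_, fun {i k} hik hkσ => ?_⟩, hσ⟩
  · obtain h | h := (hσ (σ i) i).1 (a.symm ((hσ i _).2 (.inr rfl)))
    · rw [← h, ← h]
    · exact h.symm
  · have not_rel : ¬ a.r (.inl i) (.inl k) := by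
      rw [hσ]
      exact not_or.2 ⟨hik.ne', hkσ.ne⟩
    have under {z : PV n} (hz : a.r (.inl k) z) : (i : ℕ) < ordIdx n z ∧ ordIdx n z < σ i :=
      ha.1.nested (w := .inl i) (x := .inl k) (y := .inl (σ i)) hik hkσ ((hσ i _).2 (.inr rfl)) hz
        not_rel
    refine ⟨fun hk => ?_, under ((hσ k _).2 (.inr rfl))⟩
    obtain ⟨j | j, hj, mem⟩ := blockCard_eq_two_iff.1 (ha.2 (.inl k))
    · have := (hσ k j).1 ((mem _).2 (.inr rfl))
      simp_all
    · have := under ((mem _).2 (.inr rfl))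
      simp only [ordIdx] at this
      lia

theorem exists_lower_row (ha : a ∈ Jones n) : ∃ τ : Fin n → Fin n, IsCapDiagram τ ∧
    ∀ i j, a.r (.inr i) (.inr j) ↔ j = i ∨ j = τ i :=
  exists_upper_row (reflect_mem_jones ha)

/-- The upper row of `a` is `σ`, its lower row is `τ`, and its through strings join the fixed points
of `σ` to those of `τ` along `e`. -/
structure HasRows (a : PElt n) (σ τ : Fin n → Fin n) (e : fixedPoints σ ≃o fixedPoints τ) :
    Prop where
  upper : ∀ i j, a.r (.inl i) (.inl j) ↔ j = i ∨ j = σ i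
  lower : ∀ i j, a.r (.inr i) (.inr j) ↔ j = i ∨ j = τ i
  through : ∀ i j, a.r (.inl i) (.inr j) ↔ ∃ h : σ i = i, j = e ⟨i, h⟩

theorem fixed_of_through (ha : a ∈ Jones n)
    (upper : ∀ i j, a.r (.inl i) (.inl j) ↔ j = i ∨ j = σ i) {i j : Fin n}
    (h : a.r (.inl i) (.inr j)) : σ i = i := by
  obtain ⟨y, -, mem⟩ := blockCard_eq_two_iff.1 (ha.2 (.inl i))
  obtain rfl : .inr j = y := by simpa using (mem _).1 h
  simpa using (mem (.inl (σ i))).1 ((upper i _).2 (.inr rfl))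

theorem exists_through (ha : a ∈ Jones n)
    (upper : ∀ i j, a.r (.inl i) (.inl j) ↔ j = i ∨ j = σ i)
    (lower : ∀ i j, a.r (.inr i) (.inr j) ↔ j = i ∨ j = τ i) (i : fixedPoints σ) :
    ∃ j : fixedPoints τ, a.r (.inl (i : Fin n)) (.inr (j : Fin n)) := by
  obtain ⟨j | j, hj, mem⟩ := blockCard_eq_two_iff.1 (ha.2 (.inl i))
  · have : j = i := by simpa [i.2.eq] using (upper i j).1 ((mem _).2 (.inr rfl))
    exact absurd (congrArg Sum.inl this) hj
  · have hij := (mem (.inr j)).2 (.inr rfl)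
    exact ⟨⟨j, fixed_of_through (reflect_mem_jones ha) lower (a.symm hij)⟩, hij⟩

theorem through_strictMono (ha : IsPlanar a)
    (upper : ∀ i j, a.r (.inl i) (.inl j) ↔ j = i ∨ j = σ i)
    {f : fixedPoints σ → fixedPoints τ}
    (hf : ∀ i : fixedPoints σ, a.r (.inl (i : Fin n)) (.inr (f i : Fin n))) : StrictMono f := by
  intro i i' hlt
  by_contra! hle
  have hne : ¬ a.r (.inl (i : Fin n)) (.inl (i' : Fin n)) := by
    rw [upper, i.2.eq, or_self]
    exact fun h => hlt.ne' (Subtype.ext h)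
  have hle' : (f i' : Fin n) ≤ f i := hle
  have := ha.nested (w := .inl (i : Fin n)) (x := .inl (i' : Fin n)) (y := .inr (f i : Fin n)) hlt
    (by simp only [ordIdx]; lia) (hf i) (hf i') hne
  simp only [ordIdx] at this
  lia

theorem exists_hasRows (ha : a ∈ Jones n) : ∃ σ τ, ∃ e : fixedPoints σ ≃o fixedPoints τ,
    IsCapDiagram σ ∧ IsCapDiagram τ ∧ HasRows a σ τ e := by
  obtain ⟨σ, hσ, upper⟩ := exists_upper_row ha
  obtain ⟨τ, hτ, lower⟩ := exists_lower_row ha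
  choose f hf using exists_through ha upper lower
  have hf_unique {i : fixedPoints σ} {j : fixedPoints τ}
      (h : a.r (.inl (i : Fin n)) (.inr (j : Fin n))) : f i = j := by
    have := (lower j (f i)).1 (a.trans (a.symm h) (hf i))
    rw [j.2.eq, or_self] at this
    exact Subtype.ext this
  have hsurj : Function.Surjective f := fun j => by
    obtain ⟨i, hij⟩ := exists_through (reflect_mem_jones ha) lower upper j
    exact ⟨i, hf_unique (a.symm hij)⟩
  refine ⟨σ, τ, (through_strictMono ha.1 upper hf).orderIsoOfSurjective f hsurj, hσ, hτ,
    upper, lower, fun i j => ⟨fun h => ?_, ?_⟩⟩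
  · have hi : σ i = i := fixed_of_through ha upper h
    have hj : τ j = j := fixed_of_through (reflect_mem_jones ha) lower (a.symm h)
    exact ⟨hi, congrArg Subtype.val (hf_unique (i := ⟨i, hi⟩) (j := ⟨j, hj⟩) h).symm⟩
  · rintro ⟨hi, rfl⟩
    exact hf ⟨i, hi⟩

namespace HasRows

variable {e : fixedPoints σ ≃o fixedPoints τ}

theorem reflect (h : HasRows a σ τ e) : HasRows (reflect a) τ σ e.symm where
  upper := h.lower
  lower := h.upper
  through j i := by
    change a.r (.inr j) (.inl i) ↔ _
    rw [a.comm', h.through]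
    constructor
    · rintro ⟨hi, rfl⟩
      exact ⟨(e _).2, by simp⟩
    · rintro ⟨hj, rfl⟩
      exact ⟨(e.symm _).2, by simp⟩

theorem eq (h : HasRows a σ τ e) (h' : HasRows a' σ τ e) : a = a' := by
  ext (i | i) (j | j)
  · exact (h.upper i j).trans (h'.upper i j).symm
  · exact (h.through i j).trans (h'.through i j).symm
  · exact (h.reflect.through i j).trans (h'.reflect.through i j).symm
  · exact (h.lower i j).trans (h'.lower i j).symm

theorem upper_unique {σ' τ' : Fin n → Fin n} {e' : fixedPoints σ' ≃o fixedPoints τ'}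
    (h : HasRows a σ τ e) (h' : HasRows a σ' τ' e') : σ = σ' := by
  funext i
  have hσ := (h'.upper i _).1 ((h.upper i (σ i)).2 (.inr rfl))
  have hσ' := (h.upper i _).1 ((h'.upper i (σ' i)).2 (.inr rfl))
  grind

theorem lower_unique {σ' τ' : Fin n → Fin n} {e' : fixedPoints σ' ≃o fixedPoints τ'}
    (h : HasRows a σ τ e) (h' : HasRows a σ' τ' e') : τ = τ' :=
  h.reflect.upper_unique h'.reflect

theorem blockCard_upper (h : HasRows a σ τ e) (i : Fin n) : blockCard a (.inl i) = 2 := by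
  rw [blockCard_eq_two_iff]
  obtain hi | hi := eq_or_ne (σ i) i
  · exact ⟨.inr (e ⟨i, hi⟩), by simp, by simp [h.upper, h.through, hi]⟩
  · exact ⟨.inl (σ i), by simpa using hi, by simp [h.upper, h.through, hi]⟩

theorem blockCard_eq_two (h : HasRows a σ τ e) : ∀ x, blockCard a x = 2
  | .inl i => h.blockCard_upper i
  | .inr j => (blockCard_reflect (.inl j)).symm.trans (h.reflect.blockCard_upper j)

theorem isPlanar (h : HasRows a σ τ e) (hσ : IsCapDiagram σ) (hτ : IsCapDiagram τ) :
    IsPlanar a := by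
  have upper_arc {i j : Fin n} (hij : i < j) (hr : a.r (.inl i) (.inl j)) : σ i = j := by
    simpa [hij.ne', eq_comm] using (h.upper i j).1 hr
  have lower_arc {i j : Fin n} (hij : i < j) (hr : a.r (.inr j) (.inr i)) : τ i = j := by
    simpa [hij.ne', eq_comm] using (h.lower i j).1 (a.symm hr)
  rintro ⟨w | w, x | x, y | y, z | z, hwx, hxy, hyz, hwy, hxz, -⟩ <;>
    simp only [ordIdx] at hwx hxy hyz <;> try lia
  · obtain rfl := upper_arc (by lia) hwy
    obtain rfl := upper_arc (by lia) hxz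
    exact absurd (hσ.nested hwx hxy).2.2 (by lia)
  · obtain rfl := upper_arc (by lia) hwy
    obtain ⟨hx, -⟩ := (h.through x z).1 hxz
    exact (hσ.nested hwx hxy).1 hx
  · obtain ⟨hw, rfl⟩ := (h.through w y).1 hwy
    obtain ⟨hx, rfl⟩ := (h.through x z).1 hxz
    have : e ⟨w, hw⟩ < e ⟨x, hx⟩ := e.strictMono hwx
    have : (e ⟨w, hw⟩ : Fin n) < e ⟨x, hx⟩ := this
    lia
  · obtain ⟨hw, rfl⟩ := (h.through w y).1 hwy
    have hzx := lower_arc (by lia) hxz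
    exact (hτ.nested (by lia : z < e ⟨w, hw⟩) (by lia)).1 (e ⟨w, hw⟩).2
  · have hyw := lower_arc (by lia) hwy
    have hzx := lower_arc (by lia) hxz
    have := (hτ.nested (i := z) (k := y) (by lia) (by lia)).2.2
    lia

theorem mem_jones (h : HasRows a σ τ e) (hσ : IsCapDiagram σ) (hτ : IsCapDiagram τ) :
    a ∈ Jones n :=
  ⟨h.isPlanar hσ hτ, h.blockCard_eq_two⟩

end HasRows

/-- The label of the block of a vertex in the diagram with rows `σ` and `τ` and through strings
along `e`. -/
def blockLabel (e : fixedPoints σ ≃o fixedPoints τ) :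
    PV n → fixedPoints σ ⊕ Sym2 (Fin n) ⊕ Sym2 (Fin n)
  | .inl i => if h : σ i = i then .inl ⟨i, h⟩ else .inr (.inl s(i, σ i))
  | .inr j => if h : τ j = j then .inl (e.symm ⟨j, h⟩) else .inr (.inr s(j, τ j))

theorem hasRows_ker_blockLabel (hσ : σ.Involutive) (hτ : τ.Involutive)
    (e : fixedPoints σ ≃o fixedPoints τ) : HasRows (Setoid.ker (blockLabel e)) σ τ e where
  upper i j := by
    change blockLabel e _ = blockLabel e _ ↔ _
    have := hσ i
    have := hσ j
    simp only [blockLabel]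
    split_ifs <;> grind
  lower i j := by
    change blockLabel e _ = blockLabel e _ ↔ _
    have := hτ i
    have := hτ j
    simp only [blockLabel]
    split_ifs <;> grind [EmbeddingLike.apply_eq_iff_eq]
  through i j := by
    change blockLabel e _ = blockLabel e _ ↔ _
    simp only [blockLabel]
    split_ifs with hi hj
    · rw [Sum.inl.injEq, OrderIso.eq_symm_apply]
      simp [hi, Subtype.ext_iff, eq_comm]
    · simpa [hi] using fun h : j = e ⟨i, hi⟩ => hj (h ▸ (e ⟨i, hi⟩).2)
    · simp [hi]
    · simp [hi]

end Jones

section InterfaceGraph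

open Function (fixedPoints)

theorem card_fixedPoints_add_card_moved {α : Type*} [Fintype α] [DecidableEq α] (σ : α → α) :
    Nat.card (fixedPoints σ) + (moved σ).card = Nat.card α := by
  have hfixed : Nat.card (fixedPoints σ) = ({x | σ x = x} : Finset α).card := by
    rw [Nat.card_eq_fintype_card, ← Set.toFinset_card]
    congr 1
    ext
    simp [Function.IsFixedPt]
  rw [hfixed, moved, Finset.card_filter_add_card_filter_not, Nat.card_eq_fintype_card,
    Finset.card_univ]

theorem card_moved_congr {α : Type*} [Fintype α] [DecidableEq α] {σ τ : α → α}
    (e : fixedPoints σ ≃ fixedPoints τ) : (moved σ).card = (moved τ).card := by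
  have hσ := card_fixedPoints_add_card_moved σ
  rw [Nat.card_congr e, ← card_fixedPoints_add_card_moved τ] at hσ
  exact Nat.add_left_cancel hσ

namespace HasRows

variable {n : ℕ} {a : PElt n} {σ τ : Fin n → Fin n} {e : fixedPoints σ ≃o fixedPoints τ}

theorem gconn_iff_linked (h : HasRows a σ τ e) {i j : Fin n} :
    gconn a i j ↔ Linked σ τ i j := by
  refine ⟨fun hij => ?_, fun hij => ?_⟩
  · refine Setoid.eqvGen_le (s := ⟨Linked σ τ, .refl, .symm, .trans⟩) ?_ hij
    rintro i j (⟨-, hij⟩ | ⟨-, hij⟩)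
    · obtain rfl | rfl := (h.upper i j).1 hij
      exacts [.refl j, .left i]
    · obtain rfl | rfl := (h.lower i j).1 hij
      exacts [.refl j, .right i]
  · exact hij.induction (r := ⟨gconn a, .refl, gconn_symm, gconn_trans⟩)
      (fun i => gconn_of_upper ((h.upper i _).2 (.inr rfl)))
      fun i => gconn_of_lower ((h.lower i _).2 (.inr rfl))

theorem activeDown_iff (h : HasRows a σ τ e) {i : Fin n} : activeDown a i ↔ σ i = i :=
  ⟨fun ⟨j, hj⟩ => ((h.through i j).1 hj).1, fun hi => ⟨_, (h.through i _).2 ⟨hi, rfl⟩⟩⟩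

theorem hasLow_iff (h : HasRows a σ τ e) {i : Fin n} : hasLow a i ↔ σ i ≠ i := by
  simp [hasLow, LowEdge, h.upper, and_or_left, eq_comm]

theorem hasUp_iff (h : HasRows a σ τ e) {i : Fin n} : hasUp a i ↔ τ i ≠ i :=
  h.reflect.hasLow_iff

theorem linked_of_idempotent (h : HasRows a σ τ e) (ha : pmul a a = a) (i : fixedPoints σ) :
    Linked σ τ i (e i) :=
  h.gconn_iff_linked.1 ((_root_.pmul_self_eq_iff.1 ha).1 i (e i) ((h.through _ _).2 ⟨i.2, rfl⟩))

theorem pmul_self_eq_iff (h : HasRows a σ τ e) (hσ : IsCapDiagram σ) (hτ : IsCapDiagram τ) :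
    pmul a a = a ↔ ∀ i j, σ i = i → σ j = j → Linked σ τ i j → i = j := by
  simp only [_root_.pmul_self_eq_iff, h.activeDown_iff, h.gconn_iff_linked, h.upper, h.through]
  constructor
  · rintro ⟨-, hsep⟩ i j hi hj hij
    simpa [hi, eq_comm] using hsep i j hi hj hij
  · refine fun hsep => ⟨?_, fun i j hi hj hij => .inl (hsep i j hi hj hij).symm⟩
    rintro i _ ⟨hi, rfl⟩
    exact linked_orderIso hσ hτ hsep e ⟨i, hi⟩

theorem numPaths_eq_card_fixedPoints (h : HasRows a σ τ e) (hσ : IsCapDiagram σ)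
    (hτ : IsCapDiagram τ) (ha : pmul a a = a) : numPaths a = Nat.card (fixedPoints σ) := by
  have hsep := (h.pmul_self_eq_iff hσ hτ).1 ha
  let pathComp (i : fixedPoints σ) : {θ // IsPathComp a θ} :=
    ⟨{j | gconn a i j}, ⟨⟨i, .refl _⟩, fun _ hj _ => ⟨gconn_trans hj, gconn_trans (gconn_symm hj)⟩⟩,
      i, .refl _, .inl (h.hasLow_iff.not_left.2 i.2)⟩
  refine (Nat.card_congr (.ofBijective pathComp ⟨fun i j hij => ?_, ?_⟩)).symm
  · have hj : (j : Fin n) ∈ (pathComp i).1 := hij ▸ EqvGen.refl _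
    exact Subtype.ext (hsep i j i.2 j.2 (h.gconn_iff_linked.1 hj))
  · rintro ⟨θ, ⟨hne, hθ⟩, k, hk, hend⟩
    have exists_fixed : ∃ i : fixedPoints σ, gconn a k i := by
      rw [h.hasLow_iff, h.hasUp_iff, not_not, not_not] at hend
      obtain hk | hk := hend
      · exact ⟨⟨k, hk⟩, .refl k⟩
      · refine ⟨e.symm ⟨k, hk⟩, gconn_symm (h.gconn_iff_linked.2 ?_)⟩
        simpa using h.linked_of_idempotent ha (e.symm ⟨k, hk⟩)
    obtain ⟨i, hki⟩ := exists_fixed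
    exact ⟨i, Subtype.ext (Set.ext (hθ i ((hθ k hk i).1 hki)))⟩

theorem arcsMeet_of_idempotent (h : HasRows a σ τ e) (hσ : σ.Involutive) (hτ : τ.Involutive)
    (ha : pmul a a = a) : ArcsMeet σ τ ∧ ArcsMeet τ σ := by
  refine ⟨arcsMeet_of_forall_linked hσ hτ fun x hx => ?_,
    arcsMeet_of_forall_linked hτ hσ fun x hx => ?_⟩
  · exact ⟨e.symm ⟨x, hx⟩, (e.symm _).2, by simpa using h.linked_of_idempotent ha (e.symm ⟨x, hx⟩)⟩
  · exact ⟨e ⟨x, hx⟩, (e _).2, (Linked.comm.1 (h.linked_of_idempotent ha ⟨x, hx⟩)).symm⟩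

theorem pmul_self_eq_iff_arcsMeet (h : HasRows a σ τ e) (hσ : IsCapDiagram σ)
    (hτ : IsCapDiagram τ) (cσ : (moved σ).card = 4) :
    pmul a a = a ↔ ArcsMeet σ τ ∧ ArcsMeet τ σ := by
  refine ⟨h.arcsMeet_of_idempotent hσ.involutive hτ.involutive, fun ⟨hστ, hτσ⟩ => ?_⟩
  have cτ : (moved τ).card = 4 := (card_moved_congr e.toEquiv).symm.trans cσ
  exact (h.pmul_self_eq_iff hσ hτ).2 fun i j hi hj =>
    eq_of_linked_of_fixed hσ.involutive hτ.involutive cσ cτ hστ hτσ hi hj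

end HasRows

end InterfaceGraph

section TwoArcs

variable {n : ℕ} {p q : ℕ × ℕ}

/-- The left endpoints `p.1 < p.2` of the arcs of a cap diagram with two arcs on `0, …, n - 1`. The
second arc is then `{p.2, p.2 + 1}`. -/
def IsOpenerPair (n : ℕ) (p : ℕ × ℕ) : Prop := p.1 < p.2 ∧ p.1 + 3 < n ∧ p.2 + 1 < n

/-- The right endpoint of the arc opened by `p.1`, which has to enclose the other arc if that one
starts right after `p.1`. -/
def firstCloser (p : ℕ × ℕ) : ℕ := if p.2 = p.1 + 1 then p.1 + 3 else p.1 + 1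

/-- The endpoints of the two arcs opened by `p.1` and `p.2`. -/
def arcEnds (p : ℕ × ℕ) : Finset ℕ := {p.1, firstCloser p, p.2, p.2 + 1}

/-- The involution of `ℕ` exchanging the endpoints of each of the two arcs opened by `p.1` and
`p.2`. -/
def arcPartner (p : ℕ × ℕ) (x : ℕ) : ℕ :=
  if x = p.1 then firstCloser p else if x = firstCloser p then p.1
  else if x = p.2 then p.2 + 1 else if x = p.2 + 1 then p.2 else x

theorem arcPartner_ne_iff (hp : p.1 < p.2) {x : ℕ} : arcPartner p x ≠ x ↔ x ∈ arcEnds p := by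
  have := hp.ne
  grind [arcPartner, firstCloser, arcEnds]

theorem fst_mem_arcEnds : p.1 ∈ arcEnds p := by simp [arcEnds]

theorem fst_le_of_mem_arcEnds (hp : p.1 < p.2) {x : ℕ} (hx : x ∈ arcEnds p) : p.1 ≤ x := by
  grind [arcEnds, firstCloser]

theorem card_arcEnds (hp : p.1 < p.2) : (arcEnds p).card = 4 := by
  unfold arcEnds firstCloser
  split_ifs <;> grind

theorem IsOpenerPair.arcPartner_lt (hp : IsOpenerPair n p) (x : Fin n) : arcPartner p x < n := by
  grind [IsOpenerPair, arcPartner, firstCloser]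

/-- The cap diagram whose two arcs are opened by `p.1` and `p.2`. -/
def twoArc (hp : IsOpenerPair n p) (x : Fin n) : Fin n := ⟨arcPartner p x, hp.arcPartner_lt x⟩

theorem isCapDiagram_twoArc (hp : IsOpenerPair n p) : IsCapDiagram (twoArc hp) where
  involutive x := by
    ext
    grind [twoArc, arcPartner, firstCloser, IsOpenerPair]
  nested {i k} hik hki := by
    rw [Fin.lt_def] at hik hki
    simp only [ne_eq, Fin.lt_def, Fin.ext_iff]
    simp only [twoArc] at hki ⊢
    grind [arcPartner, firstCloser, IsOpenerPair]

theorem twoArc_ne_iff (hp : IsOpenerPair n p) {x : Fin n} :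
    twoArc hp x ≠ x ↔ (x : ℕ) ∈ arcEnds p := by
  rw [← arcPartner_ne_iff hp.1, ne_eq, Fin.ext_iff, twoArc]

theorem IsOpenerPair.lt_of_mem_arcEnds (hp : IsOpenerPair n p) {x : ℕ} (hx : x ∈ arcEnds p) :
    x < n := by
  grind [IsOpenerPair, arcEnds, firstCloser]

theorem card_moved_twoArc (hp : IsOpenerPair n p) : (moved (twoArc hp)).card = 4 := by
  have hmap : (moved (twoArc hp)).map Fin.valEmbedding = arcEnds p := by
    ext x
    simp only [Finset.mem_map, mem_moved, twoArc_ne_iff, Fin.valEmbedding_apply]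
    exact ⟨by rintro ⟨y, hy, rfl⟩; exact hy, fun hx => ⟨⟨x, hp.lt_of_mem_arcEnds hx⟩, hx, rfl⟩⟩
  rw [← Finset.card_map, hmap, card_arcEnds hp.1]

theorem twoArc_injective (hp : IsOpenerPair n p) (hq : IsOpenerPair n q)
    (h : twoArc hp = twoArc hq) : p = q := by
  have partner_eq (x : ℕ) (hx : x < n) : arcPartner p x = arcPartner q x :=
    congrArg Fin.val (congrFun h ⟨x, hx⟩)
  unfold IsOpenerPair at hp hq
  have hfst : p.1 = q.1 := by
    have mem_iff (x : ℕ) (hx : x < n) : x ∈ arcEnds p ↔ x ∈ arcEnds q := by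
      rw [← arcPartner_ne_iff hp.1, ← arcPartner_ne_iff hq.1, partner_eq x hx]
    exact le_antisymm
      (fst_le_of_mem_arcEnds hp.1 ((mem_iff q.1 (by lia)).2 fst_mem_arcEnds))
      (fst_le_of_mem_arcEnds hq.1 ((mem_iff p.1 (by lia)).1 fst_mem_arcEnds))
  have hcloser : firstCloser p = firstCloser q := by
    simpa [arcPartner, hfst] using partner_eq q.1 (by lia)
  have hsnd : p.2 = q.2 := by
    have hpp := partner_eq p.2 (by lia)
    have hqq := partner_eq q.2 (by lia)
    grind [arcPartner, firstCloser]
  exact Prod.ext hfst hsnd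

theorem exists_innermost_arc {σ : Fin n → Fin n} (hσ : IsCapDiagram σ) {x : Fin n}
    (hx : σ x ≠ x) : ∃ j, (σ j : ℕ) = j + 1 ∧ ∀ i, i < σ i → i ≤ j := by
  obtain ⟨j, hj, hmax⟩ : ∃ j, j < σ j ∧ ∀ i, i < σ i → i ≤ j := by
    have hne : ({i | i < σ i} : Finset (Fin n)).Nonempty := by
      obtain hlt | hlt := hx.lt_or_gt
      · exact ⟨σ x, by simpa [hσ.involutive x]⟩
      · exact ⟨x, by simpa⟩
    obtain ⟨j, hj, hmax⟩ := Finset.exists_max_image _ id hne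
    exact ⟨j, by simpa using hj, fun i hi => hmax i (by simpa using hi)⟩
  refine ⟨j, ?_, hmax⟩
  by_contra hne
  obtain ⟨k, hk⟩ : ∃ k : Fin n, (k : ℕ) = j + 1 := ⟨⟨j + 1, by lia⟩, rfl⟩
  have hnest := hσ.nested (i := j) (k := k) (by lia) (by lia)
  have := hmax k
  lia

theorem exists_two_arcs {σ : Fin n → Fin n} (hσ : IsCapDiagram σ) (cσ : (moved σ).card = 4) :
    ∃ i j, i < j ∧ i < σ i ∧ (σ j : ℕ) = j + 1 ∧ moved σ = {j, σ j, i, σ i} := by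
  obtain ⟨x, hx⟩ : (moved σ).Nonempty := Finset.card_pos.1 (by lia)
  obtain ⟨j, hj, hmax⟩ := exists_innermost_arc hσ (mem_moved.1 hx)
  obtain ⟨i, hi, hij, hiσ⟩ : ∃ i, i < σ i ∧ i ≠ j ∧ i ≠ σ j := by
    obtain ⟨z, hz, hzj, hzσ⟩ := exists_moved_ne (σ := σ) (by lia) j (σ j)
    obtain hlt | hlt := hz.lt_or_gt
    · exact ⟨σ z, by rwa [hσ.involutive z], fun h => hzσ (h ▸ (hσ.involutive z).symm),
        hσ.involutive.injective.ne hzj⟩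
    · exact ⟨z, hlt, hzj, hzσ⟩
  exact ⟨i, j, (hmax i hi).lt_of_ne hij, hi, hj,
    moved_eq_of_card_eq_four hσ.involutive cσ (by lia) hi.ne' hij hiσ⟩

theorem exists_eq_twoArc {σ : Fin n → Fin n} (hσ : IsCapDiagram σ) (cσ : (moved σ).card = 4) :
    ∃ p, ∃ hp : IsOpenerPair n p, σ = twoArc hp := by
  obtain ⟨i, j, hlt, hi, hj, hmoved⟩ := exists_two_arcs hσ cσ
  have mem_of_moved {k : Fin n} (hk : σ k ≠ k) : k = j ∨ k = σ j ∨ k = i ∨ k = σ i := by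
    simpa [hmoved] using mem_moved.2 hk
  have mem_of_under {k : Fin n} (hik : i < k) (hki : k < σ i) : k = j ∨ k = σ j := by
    have := mem_of_moved (hσ.nested hik hki).1
    lia
  have hσi : (σ i : ℕ) = firstCloser (i, j) := by
    obtain hadj | hgap := eq_or_ne (σ i : ℕ) (i + 1)
    · have : σ j ≠ i := fun h => by lia
      grind [firstCloser]
    · obtain ⟨k, hk⟩ : ∃ k : Fin n, (k : ℕ) = i + 1 := ⟨⟨i + 1, by lia⟩, rfl⟩
      have hkj : k = j := by grind [mem_of_under (k := k) (by lia) (by lia)]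
      have hjσ := (hσ.nested (i := i) (k := j) hlt (by lia)).2.2
      have : ¬ (j : ℕ) + 2 < σ i := fun hgt => by
        obtain ⟨l, hl⟩ : ∃ l : Fin n, (l : ℕ) = j + 2 := ⟨⟨j + 2, by lia⟩, rfl⟩
        have := mem_of_under (k := l) (by lia) (by lia)
        lia
      rw [firstCloser, if_pos (by lia)]
      lia
  have hp : IsOpenerPair n (i, j) := by
    grind [IsOpenerPair, firstCloser]
  refine ⟨(i, j), hp, funext fun x => Fin.ext ?_⟩
  change (σ x : ℕ) = arcPartner (i, j) x
  simp only [arcPartner, ← hσi, ← hj, Fin.val_inj]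
  have hx := mem_of_moved (k := x)
  have hjj := hσ.involutive j
  have hii := hσ.involutive i
  grind

/-- Every arc of the cap diagram opened by `p` contains an endpoint of an arc of the one opened by
`q`. -/
def OpenersMeet (p q : ℕ × ℕ) : Prop :=
  (p.1 ∈ arcEnds q ∨ firstCloser p ∈ arcEnds q) ∧ (p.2 ∈ arcEnds q ∨ p.2 + 1 ∈ arcEnds q)

theorem arcsMeet_twoArc_iff (hp : IsOpenerPair n p) (hq : IsOpenerPair n q) :
    ArcsMeet (twoArc hp) (twoArc hq) ↔ OpenersMeet p q := by
  have forall_iff : ArcsMeet (twoArc hp) (twoArc hq) ↔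
      ∀ x ∈ arcEnds p, x ∈ arcEnds q ∨ arcPartner p x ∈ arcEnds q := by
    simp only [ArcsMeet, twoArc_ne_iff]
    exact ⟨fun h x hx => h ⟨x, hp.lt_of_mem_arcEnds hx⟩ hx, fun h x hx => h x hx⟩
  rw [forall_iff]
  have := hp.1
  unfold OpenersMeet
  generalize arcEnds q = S
  grind [arcEnds, arcPartner, firstCloser]

end TwoArcs

section Counting

variable {n : ℕ} {p q : ℕ × ℕ}

instance : Decidable (IsOpenerPair n p) := inferInstanceAs (Decidable (_ ∧ _))

instance : Decidable (OpenersMeet p q) := inferInstanceAs (Decidable (_ ∧ _))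

/-- The pairs of two-arc cap diagrams on `n` points, given by their openers, in which every arc of
each diagram contains an endpoint of an arc of the other one. -/
def meetingPairs (n : ℕ) : Finset ((ℕ × ℕ) × (ℕ × ℕ)) :=
  {x ∈ (Finset.range n ×ˢ Finset.range n) ×ˢ (Finset.range n ×ˢ Finset.range n) |
    (IsOpenerPair n x.1 ∧ IsOpenerPair n x.2) ∧ OpenersMeet x.1 x.2 ∧ OpenersMeet x.2 x.1}

theorem mem_meetingPairs : (p, q) ∈ meetingPairs n ↔
    (IsOpenerPair n p ∧ IsOpenerPair n q) ∧ OpenersMeet p q ∧ OpenersMeet q p := by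
  simp only [meetingPairs, Finset.mem_filter, Finset.mem_product, Finset.mem_range,
    and_iff_right_iff_imp]
  unfold IsOpenerPair
  lia

/-- The members of `meetingPairs n` one of whose arcs starts at the leftmost point. -/
def rootedPairs (n : ℕ) : Finset ((ℕ × ℕ) × (ℕ × ℕ)) :=
  {x ∈ meetingPairs n | x.1.1 = 0 ∨ x.2.1 = 0}

theorem mem_rootedPairs : (p, q) ∈ rootedPairs n ↔
    (p.1 = 0 ∨ q.1 = 0) ∧ (IsOpenerPair n p ∧ IsOpenerPair n q) ∧
      OpenersMeet p q ∧ OpenersMeet q p := by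
  rw [rootedPairs, Finset.mem_filter, mem_meetingPairs, and_comm]

theorem succ_mem_arcEnds {x : ℕ} : x + 1 ∈ arcEnds (p + 1) ↔ x ∈ arcEnds p := by
  grind [arcEnds, firstCloser, Prod.fst_add, Prod.snd_add, Prod.fst_one, Prod.snd_one]

theorem firstCloser_succ : firstCloser (p + 1) = firstCloser p + 1 := by
  grind [firstCloser, Prod.fst_add, Prod.snd_add, Prod.fst_one, Prod.snd_one]

theorem openersMeet_succ : OpenersMeet (p + 1) (q + 1) ↔ OpenersMeet p q := by
  simp [OpenersMeet, succ_mem_arcEnds, firstCloser_succ]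

theorem isOpenerPair_succ : IsOpenerPair (n + 1) (p + 1) ↔ IsOpenerPair n p := by
  simp only [IsOpenerPair, Prod.fst_add, Prod.snd_add, Prod.fst_one, Prod.snd_one]
  lia

theorem IsOpenerPair.exists_add_one_eq (hp : IsOpenerPair n p) (h0 : p.1 ≠ 0) :
    ∃ p', p' + 1 = p :=
  ⟨(p.1 - 1, p.2 - 1), Prod.ext (Nat.sub_add_cancel (Nat.pos_of_ne_zero h0))
    (Nat.sub_add_cancel (Nat.one_le_of_lt hp.1))⟩

theorem meetingPairs_succ_filter_not_rooted :
    {x ∈ meetingPairs (n + 1) | ¬ (x.1.1 = 0 ∨ x.2.1 = 0)} =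
      (meetingPairs n).map (addRightEmbedding 1) := by
  have succ_mem_iff (p q : ℕ × ℕ) :
      (p + 1, q + 1) ∈ meetingPairs (n + 1) ↔ (p, q) ∈ meetingPairs n := by
    simp only [mem_meetingPairs, isOpenerPair_succ, openersMeet_succ]
  ext ⟨p, q⟩
  simp only [Finset.mem_filter, Finset.mem_map, addRightEmbedding_apply, not_or]
  constructor
  · rintro ⟨hpq, hp, hq⟩
    have hopeners := (mem_meetingPairs.1 hpq).1
    obtain ⟨p, rfl⟩ := hopeners.1.exists_add_one_eq hp
    obtain ⟨q, rfl⟩ := hopeners.2.exists_add_one_eq hq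
    exact ⟨(p, q), (succ_mem_iff p q).1 hpq, rfl⟩
  · rintro ⟨⟨p, q⟩, hpq, h⟩
    obtain ⟨rfl, rfl⟩ := Prod.ext_iff.1 h
    exact ⟨(succ_mem_iff p q).2 hpq, by simp, by simp⟩

theorem card_meetingPairs_succ :
    (meetingPairs (n + 1)).card = (meetingPairs n).card + (rootedPairs (n + 1)).card := by
  rw [← Finset.card_filter_add_card_filter_not (fun x => x.1.1 = 0 ∨ x.2.1 = 0),
    meetingPairs_succ_filter_not_rooted, Finset.card_map, rootedPairs, add_comm]

theorem OpenersMeet.isOpenerPair_six (hp : p.2 = p.1 + 1) (hq : q.1 < q.2)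
    (hroot : p.1 = 0 ∨ q.1 = 0) (hpq : OpenersMeet p q) (hqp : OpenersMeet q p) :
    IsOpenerPair 6 p ∧ IsOpenerPair 6 q := by
  simp only [OpenersMeet, arcEnds, firstCloser, if_pos hp, Finset.mem_insert,
    Finset.mem_singleton] at hpq hqp
  unfold IsOpenerPair
  split_ifs at hpq hqp <;> omega

theorem openersMeet_iff_of_rooted (hp : p.1 + 1 < p.2) (hq : q.1 + 1 < q.2)
    (hroot : p.1 = 0 ∨ q.1 = 0) : OpenersMeet p q ∧ OpenersMeet q p ↔
      (p.1 ≤ 1 ∧ q.1 ≤ 1) ∧ p.2 ≤ q.2 + 1 ∧ q.2 ≤ p.2 + 1 := by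
  simp only [OpenersMeet, arcEnds, firstCloser, if_neg hp.ne', if_neg hq.ne', Finset.mem_insert,
    Finset.mem_singleton]
  omega

theorem IsOpenerPair.mono {m : ℕ} (hmn : m ≤ n) (hp : IsOpenerPair m p) : IsOpenerPair n p :=
  ⟨hp.1, hp.2.1.trans_le hmn, hp.2.2.trans_le hmn⟩

theorem notMem_rootedPairs_sdiff_of_adjacent {m : ℕ} (hm : 6 ≤ m) (hp : p.2 = p.1 + 1) :
    (p, q) ∉ rootedPairs n \ rootedPairs m ∧ (q, p) ∉ rootedPairs n \ rootedPairs m := by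
  simp only [Finset.mem_sdiff, mem_rootedPairs]
  constructor
  · rintro ⟨⟨hroot, ⟨-, hq⟩, hpq, hqp⟩, hnot⟩
    have h := OpenersMeet.isOpenerPair_six hp hq.1 hroot hpq hqp
    exact hnot ⟨hroot, ⟨h.1.mono hm, h.2.mono hm⟩, hpq, hqp⟩
  · rintro ⟨⟨hroot, ⟨hq, -⟩, hqp, hpq⟩, hnot⟩
    have h := OpenersMeet.isOpenerPair_six hp hq.1 hroot.symm hpq hqp
    exact hnot ⟨hroot, ⟨h.2.mono hm, h.1.mono hm⟩, hqp, hpq⟩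

theorem mem_rootedPairs_sdiff {m i i' j j' : ℕ} (hm : 4 ≤ m) :
    ((i, j), (i', j')) ∈ rootedPairs (m + 3) \ rootedPairs (m + 2) ↔
      (i, i') ∈ ({(0, 0), (0, 1), (1, 0)} : Finset (ℕ × ℕ)) ∧
        (j, j') ∈ ({(m + 1, m + 1), (m, m + 1), (m + 1, m)} : Finset (ℕ × ℕ)) := by
  simp only [Finset.mem_insert, Finset.mem_singleton, Prod.mk.injEq]
  by_cases hgap : (j = i + 1 ∨ j' = i' + 1) ∨ ¬ (i < j ∧ i' < j' ∧ (i = 0 ∨ i' = 0))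
  · refine iff_of_false (fun hmem => ?_) (by lia)
    obtain (hj | hj) | hnot := hgap
    · exact (notMem_rootedPairs_sdiff_of_adjacent (by lia) hj).1 hmem
    · exact (notMem_rootedPairs_sdiff_of_adjacent (by lia) hj).2 hmem
    · rw [Finset.mem_sdiff, mem_rootedPairs] at hmem
      exact hnot ⟨hmem.1.2.1.1.1, hmem.1.2.1.2.1, hmem.1.1⟩
  · have hmeet := openersMeet_iff_of_rooted (p := (i, j)) (q := (i', j')) (by lia) (by lia) (by lia)
    simp only [Finset.mem_sdiff, mem_rootedPairs, hmeet, IsOpenerPair]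
    omega

theorem card_rootedPairs_succ {m : ℕ} (hm : 4 ≤ m) :
    (rootedPairs (m + 3)).card = (rootedPairs (m + 2)).card + 9 := by
  have hsub : rootedPairs (m + 2) ⊆ rootedPairs (m + 3) := fun ⟨p, q⟩ h => by
    rw [mem_rootedPairs] at h ⊢
    exact ⟨h.1, ⟨h.2.1.1.mono (by lia), h.2.1.2.mono (by lia)⟩, h.2.2⟩
  have hnew : rootedPairs (m + 3) \ rootedPairs (m + 2) =
      (({(0, 0), (0, 1), (1, 0)} ×ˢ {(m + 1, m + 1), (m, m + 1), (m + 1, m)}) :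
        Finset ((ℕ × ℕ) × (ℕ × ℕ))).map (Equiv.prodProdProdComm ℕ ℕ ℕ ℕ).toEmbedding := by
    ext ⟨⟨i, j⟩, i', j'⟩
    rw [mem_rootedPairs_sdiff hm, Finset.mem_map_equiv, Equiv.prodProdProdComm_symm,
      Equiv.prodProdProdComm_apply, Finset.mem_product]
  rw [← Finset.card_sdiff_add_card_eq_card hsub, hnew, Finset.card_map, Finset.card_product,
    add_comm, Finset.card_eq_three.2 ⟨_, _, _, by simp, by simp, by simp, rfl⟩,
    Finset.card_eq_three.2 ⟨_, _, _, by simp, by simp, by simp, rfl⟩]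

theorem card_rootedPairs (hn : 6 ≤ n) : (rootedPairs n).card + 22 = 9 * n := by
  induction n, hn using Nat.le_induction with
  | base => decide +kernel
  | succ n hn ih =>
    obtain ⟨m, rfl⟩ : ∃ m, n = m + 2 := ⟨n - 2, by lia⟩
    have := card_rootedPairs_succ (m := m) (by lia)
    lia

theorem two_mul_card_meetingPairs (hn : 5 ≤ n) :
    2 * ((meetingPairs n).card : ℤ) = n * (9 * n - 35) := by
  induction n, hn using Nat.le_induction with
  | base => decide +kernel
  | succ n hn ih =>
    have hrooted : ((rootedPairs (n + 1)).card : ℤ) + 22 = 9 * (n + 1) :=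
      mod_cast card_rootedPairs (by lia)
    rw [card_meetingPairs_succ]
    push_cast
    linear_combination ih + 2 * hrooted

end Counting

section DepthTwo

open Function (fixedPoints)

variable {n : ℕ} {p q : ℕ × ℕ}

theorem card_fixedPoints_twoArc (hp : IsOpenerPair n p) :
    Nat.card (fixedPoints (twoArc hp)) + 4 = n := by
  have := card_fixedPoints_add_card_moved (twoArc hp)
  rwa [card_moved_twoArc, Nat.card_fin] at this

/-- The order isomorphism along which the through strings join the rows `twoArc hp` and
`twoArc hq`. -/
noncomputable def twoArcIso (hp : IsOpenerPair n p) (hq : IsOpenerPair n q) :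
    fixedPoints (twoArc hp) ≃o fixedPoints (twoArc hq) :=
  (Fintype.orderIsoFinOfCardEq _ Nat.card_eq_fintype_card.symm).symm.trans
    (Fintype.orderIsoFinOfCardEq _ <| by
      have := card_fixedPoints_twoArc hp
      rw [← Nat.card_eq_fintype_card]
      have := card_fixedPoints_twoArc hq
      lia)

/-- The planar diagram of depth two with upper row `twoArc hp` and lower row `twoArc hq`. -/
noncomputable abbrev twoArcDiagram (hp : IsOpenerPair n p) (hq : IsOpenerPair n q) : PElt n :=
  Setoid.ker (blockLabel (twoArcIso hp hq))

theorem hasRows_twoArcDiagram (hp : IsOpenerPair n p) (hq : IsOpenerPair n q) :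
    HasRows (twoArcDiagram hp hq) (twoArc hp) (twoArc hq) (twoArcIso hp hq) :=
  hasRows_ker_blockLabel (isCapDiagram_twoArc hp).involutive (isCapDiagram_twoArc hq).involutive _

theorem pmul_self_twoArcDiagram_iff (hp : IsOpenerPair n p) (hq : IsOpenerPair n q) :
    pmul (twoArcDiagram hp hq) (twoArcDiagram hp hq) = twoArcDiagram hp hq ↔
      OpenersMeet p q ∧ OpenersMeet q p := by
  rw [(hasRows_twoArcDiagram hp hq).pmul_self_eq_iff_arcsMeet (isCapDiagram_twoArc hp)
    (isCapDiagram_twoArc hq) (card_moved_twoArc hp), arcsMeet_twoArc_iff, arcsMeet_twoArc_iff]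

theorem twoArcDiagram_injective {p' q' : ℕ × ℕ} (hp : IsOpenerPair n p) (hq : IsOpenerPair n q)
    (hp' : IsOpenerPair n p') (hq' : IsOpenerPair n q')
    (h : twoArcDiagram hp hq = twoArcDiagram hp' hq') : p = p' ∧ q = q' := by
  have rows₁ := hasRows_twoArcDiagram hp hq
  rw [h] at rows₁
  have rows₂ := hasRows_twoArcDiagram hp' hq'
  exact ⟨twoArc_injective hp hp' (rows₁.upper_unique rows₂),
    twoArc_injective hq hq' (rows₁.lower_unique rows₂)⟩

/-- The idempotents of the Jones monoid `J_n` of rank `n - 4`, the rank of an idempotent being the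
number of path components of its interface graph. -/
def depthTwoIdempotents (n : ℕ) : Set (PElt n) :=
  {a | a ∈ Jones n ∧ pmul a a = a ∧ (numPaths a : ℤ) = n - 4}

theorem twoArcDiagram_mem_depthTwoIdempotents (hp : IsOpenerPair n p) (hq : IsOpenerPair n q)
    (hpq : OpenersMeet p q ∧ OpenersMeet q p) : twoArcDiagram hp hq ∈ depthTwoIdempotents n := by
  have hrows := hasRows_twoArcDiagram hp hq
  have hσ := isCapDiagram_twoArc hp
  have hτ := isCapDiagram_twoArc hq
  have hidem := (pmul_self_twoArcDiagram_iff hp hq).2 hpq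
  have hpaths := hrows.numPaths_eq_card_fixedPoints hσ hτ hidem
  have hfixed := card_fixedPoints_twoArc hp
  exact ⟨hrows.mem_jones hσ hτ, hidem, by lia⟩

theorem exists_eq_twoArcDiagram {a : PElt n} (ha : a ∈ depthTwoIdempotents n) :
    ∃ p q, ∃ (hp : IsOpenerPair n p) (hq : IsOpenerPair n q), twoArcDiagram hp hq = a := by
  obtain ⟨hJ, hidem, hpaths⟩ := ha
  obtain ⟨σ, τ, e, hσ, hτ, hrows⟩ := exists_hasRows hJ
  have cσ : (moved σ).card = 4 := by
    have hfixed := hrows.numPaths_eq_card_fixedPoints hσ hτ hidem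
    have hcard := card_fixedPoints_add_card_moved σ
    rw [Nat.card_fin] at hcard
    lia
  obtain ⟨p, hp, rfl⟩ := exists_eq_twoArc hσ cσ
  obtain ⟨q, hq, rfl⟩ := exists_eq_twoArc hτ ((card_moved_congr e.toEquiv).symm.trans cσ)
  obtain rfl : e = twoArcIso hp hq := Subsingleton.elim _ _
  exact ⟨p, q, hp, hq, (hasRows_twoArcDiagram hp hq).eq hrows⟩

theorem card_depthTwoIdempotents : Nat.card (depthTwoIdempotents n) = (meetingPairs n).card := by
  let diagram (x : meetingPairs n) : depthTwoIdempotents n :=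
    have hx := mem_meetingPairs.1 x.2
    ⟨twoArcDiagram hx.1.1 hx.1.2, twoArcDiagram_mem_depthTwoIdempotents _ _ hx.2⟩
  have hbij : Function.Bijective diagram := by
    refine ⟨fun x y hxy => Subtype.ext (Prod.ext_iff.2 ?_), fun ⟨a, ha⟩ => ?_⟩
    · exact twoArcDiagram_injective _ _ _ _ (congrArg Subtype.val hxy)
    · obtain ⟨p, q, hp, hq, rfl⟩ := exists_eq_twoArcDiagram ha
      have hpq := (pmul_self_twoArcDiagram_iff hp hq).1 ha.2.1
      exact ⟨⟨(p, q), mem_meetingPairs.2 ⟨⟨hp, hq⟩, hpq⟩⟩, rfl⟩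
  rw [← Nat.card_congr (.ofBijective diagram hbij), Nat.card_eq_fintype_card, Fintype.card_coe]

end DepthTwo

/-- Proposition 6.5. For all `n ≥ 5`, the number of idempotents of
the Jones monoid `J_n` of rank `n − 4` is `e_{n;·,n−4} = (n/2)(9n − 35)`. -/
theorem jones_depth_two (n : ℕ) (hn : 5 ≤ n) :
    eJdot n ((n : ℤ) - 4) = n * (9 * n - 35) / 2 := by
  have hcard : eJdot n ((n : ℤ) - 4) = (meetingPairs n).card := card_depthTwoIdempotents
  have hcount : 2 * (meetingPairs n).card = n * (9 * n - 35) := by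
    zify [show 35 ≤ 9 * n by lia]
    exact two_mul_card_meetingPairs hn
  rw [hcard, ← hcount, Nat.mul_div_cancel_left _ two_pos]
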